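/- Let C be a compact strictly convex planar body whose boundary is traced by a C^∞, λ-periodic, affinely parametrized curve x with affine curvature k, and for n ≥ 3 let δ_i(n) := Area(C) − sup{ Area(convexHull(S)) : S ⊆ ∂C, S finite, |S| ≤ n }. Then lim_{n→∞} n⁶ · ( δ_i(n) − λ³/(12 n²) + (λ⁴/(240 n⁴)) · ∫₀^λ k(s) ds ) = −(9 λ⁶/50400) · ∫₀^λ k(s)² ds + (λ⁵/3600) · ( ∫₀^λ k(s) ds )². Equivalently, δ_i(n) = λ³/(12 n²) − (λ⁴/(2·5!))·(1/n⁴)·∫₀^λ k(s) ds + (1/n⁶)·[ −(9/(10·7!)) λ⁶ ∫₀^λ k(s)² ds + (1/(30·5!)) λ⁵ (∫₀^λ k(s) ds)² ] + o(1/n⁶) as n → ∞. -/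

import Mathlib

open Filter MeasureTheory
open scoped Topology

/-- The standard area form on the plane: `ω(u,v) = u₁v₂ − u₂v₁`. -/
noncomputable def om (u v : ℝ × ℝ) : ℝ := u.1 * v.2 - u.2 * v.1

/-!
The deficit of an inscribed polygon is the sum of the areas of the caps cut off by its edges. With
`K = ∫ k` and `L = ∫ (k² + k'')` over an arc of affine length `h`, the cap area is
`h³/12 - h⁴K/240 + h⁶L/10080 + O(h⁸)`. Around the mean length `η = λ/n` and the mean curvature `κ`,
completing the square in `h` puts the minimum near `h = η + η²(K - κh)/30`. The tangent of the model
there is additive along the boundary, so its sum over the edges depends only on `λ`, `n`, `∫ k` and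
`∫ k²`, and this sum is the asserted expansion (`∫ k''` vanishes by periodicity). No cap lies below
the tangent by more than `O(η⁸)`, and vertices spaced with that correction come within `O(η⁸)`.
-/

section AreaForm

@[simp] lemma om_self (u : ℝ × ℝ) : om u u = 0 := by
  unfold om; ring

@[simp] lemma om_zero_left (v : ℝ × ℝ) : om 0 v = 0 := by
  simp [om]

@[simp] lemma om_zero_right (u : ℝ × ℝ) : om u 0 = 0 := by
  simp [om]

lemma om_swap (u v : ℝ × ℝ) : om u v = -om v u := by
  unfold om; ring

lemma om_smul_left (r : ℝ) (u v : ℝ × ℝ) : om (r • u) v = r * om u v := by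
  simp only [om, Prod.smul_fst, Prod.smul_snd, smul_eq_mul]; ring

lemma om_smul_right (r : ℝ) (u v : ℝ × ℝ) : om u (r • v) = r * om u v := by
  simp only [om, Prod.smul_fst, Prod.smul_snd, smul_eq_mul]; ring

lemma om_sub_right (u v w : ℝ × ℝ) : om u (v - w) = om u v - om u w := by
  simp only [om, Prod.fst_sub, Prod.snd_sub]; ring

lemma om_add_right (u v w : ℝ × ℝ) : om u (v + w) = om u v + om u w := by
  simp only [om, Prod.fst_add, Prod.snd_add]; ring

@[fun_prop]
lemma continuous_om {X : Type*} [TopologicalSpace X] {f g : X → ℝ × ℝ} (hf : Continuous f)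
    (hg : Continuous g) : Continuous fun t => om (f t) (g t) := by
  unfold om; fun_prop

lemma hasDerivAt_om {f g : ℝ → ℝ × ℝ} {f' g' : ℝ × ℝ} {t : ℝ} (hf : HasDerivAt f f' t)
    (hg : HasDerivAt g g' t) :
    HasDerivAt (fun s => om (f s) (g s)) (om f' (g t) + om (f t) g') t := by
  have fst_comp {h : ℝ → ℝ × ℝ} {h' : ℝ × ℝ} (hh : HasDerivAt h h' t) :
      HasDerivAt (fun s => (h s).1) h'.1 t :=
    (ContinuousLinearMap.fst ℝ ℝ ℝ).hasFDerivAt.comp_hasDerivAt t hh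
  have snd_comp {h : ℝ → ℝ × ℝ} {h' : ℝ × ℝ} (hh : HasDerivAt h h' t) :
      HasDerivAt (fun s => (h s).2) h'.2 t :=
    (ContinuousLinearMap.snd ℝ ℝ ℝ).hasFDerivAt.comp_hasDerivAt t hh
  refine (((fst_comp hf).mul (snd_comp hg)).sub ((snd_comp hf).mul (fst_comp hg))).congr_deriv ?_
  simp only [om]; ring

end AreaForm

section Sector

/-- The polar map `(r, t) ↦ o + r (y t - o)` sweeping the sector between the point `o` and the
curve `y`. -/
noncomputable def fan (y : ℝ → ℝ × ℝ) (o : ℝ × ℝ) (z : ℝ × ℝ) : ℝ × ℝ := o + z.1 • (y z.2 - o)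

/-- The total derivative of `fan y o` at `z`. -/
noncomputable def fanDeriv (y : ℝ → ℝ × ℝ) (o z : ℝ × ℝ) : ℝ × ℝ →L[ℝ] ℝ × ℝ :=
  (Matrix.toLin (.finTwoProd ℝ) (.finTwoProd ℝ)
    !![(y z.2 - o).1, z.1 * (deriv y z.2).1;
       (y z.2 - o).2, z.1 * (deriv y z.2).2]).toContinuousLinearMap

/-- The signed area swept by the segment from `o` to `y t` as `t` runs from `a` to `b`. -/
noncomputable def sectorArea (y : ℝ → ℝ × ℝ) (o : ℝ × ℝ) (a b : ℝ) : ℝ :=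
  1 / 2 * ∫ t in a..b, om (y t - o) (deriv y t)

variable {y : ℝ → ℝ × ℝ} {o : ℝ × ℝ} {a b : ℝ}

lemma det_fanDeriv (y : ℝ → ℝ × ℝ) (o z : ℝ × ℝ) :
    (fanDeriv y o z).det = z.1 * om (y z.2 - o) (deriv y z.2) := by
  simp only [fanDeriv, om, LinearMap.det_toContinuousLinearMap, LinearMap.det_toLin,
    Matrix.det_fin_two_of]
  ring

lemma hasFDerivAt_fan {z : ℝ × ℝ} (hy : DifferentiableAt ℝ y z.2) :
    HasFDerivAt (fan y o) (fanDeriv y o z) z := by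
  have hsnd : HasFDerivAt (fun z : ℝ × ℝ => y z.2)
      ((ContinuousLinearMap.snd ℝ ℝ ℝ).smulRight (deriv y z.2)) z := by
    convert! hy.hasDerivAt.hasFDerivAt.comp z
      (hasFDerivAt_snd (𝕜 := ℝ) (E := ℝ) (F := ℝ) (p := z)) using 1
  refine ((hasFDerivAt_fst.smul (hsnd.sub_const o)).const_add o).congr_fderiv ?_
  rw [fanDeriv, Matrix.toLin_finTwoProd_toContinuousLinearMap]
  ext <;> simp

lemma injOn_fan
    (hpos : ∀ s ∈ Set.Ioo a b, ∀ t ∈ Set.Ioo a b, s < t → 0 < om (y s - o) (y t - o)) :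
    Set.InjOn (fan y o) (Set.Ioo 0 1 ×ˢ Set.Ioo a b) := by
  have not_lt_of_eq : ∀ z ∈ Set.Ioo (0 : ℝ) 1 ×ˢ Set.Ioo a b,
      ∀ z' ∈ Set.Ioo (0 : ℝ) 1 ×ˢ Set.Ioo a b, fan y o z = fan y o z' → ¬ z.2 < z'.2 := by
    intro z hz z' hz' he hlt
    have hz0 : om (z.1 • (y z.2 - o)) (y z'.2 - o) = 0 := by
      rw [add_left_cancel he, om_smul_left, om_self, mul_zero]
    rw [om_smul_left] at hz0
    exact (mul_pos hz.1.1 (hpos _ hz.2 _ hz'.2 hlt)).ne' hz0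
  intro z hz z' hz' he
  have ht : z.2 = z'.2 :=
    le_antisymm (not_lt.1 (not_lt_of_eq _ hz' _ hz he.symm)) (not_lt.1 (not_lt_of_eq _ hz _ hz' he))
  have hne : y z'.2 - o ≠ 0 := by
    intro h0
    obtain ⟨t, ht1, ht2⟩ := exists_between hz'.2.2
    simpa [h0] using hpos _ hz'.2 t ⟨hz'.2.1.trans ht1, ht2⟩ ht1
  refine Prod.ext (smul_left_injective ℝ hne ?_) ht
  simpa only [fan, ht, add_right_inj] using he

lemma lintegral_det_fanDeriv (hy : ContDiff ℝ 1 y) (hab : a ≤ b)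
    (hnn : ∀ t ∈ Set.Ioo a b, 0 ≤ om (y t - o) (deriv y t)) :
    ∫⁻ z in Set.Ioo 0 1 ×ˢ Set.Ioo a b, ENNReal.ofReal |(fanDeriv y o z).det| =
      ENNReal.ofReal (sectorArea y o a b) := by
  have hm : MeasurableSet (Set.Ioo (0 : ℝ) 1 ×ˢ Set.Ioo a b) :=
    measurableSet_Ioo.prod measurableSet_Ioo
  have hnn' : ∀ z ∈ Set.Ioo (0 : ℝ) 1 ×ˢ Set.Ioo a b, 0 ≤ z.1 * om (y z.2 - o) (deriv y z.2) :=
    fun z hz => mul_nonneg hz.1.1.le (hnn _ hz.2)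
  have hcont : Continuous fun z : ℝ × ℝ => z.1 * om (y z.2 - o) (deriv y z.2) := by
    have := hy.continuous
    have := hy.continuous_deriv le_rfl
    fun_prop
  have hint : IntegrableOn (fun z : ℝ × ℝ => z.1 * om (y z.2 - o) (deriv y z.2))
      (Set.Ioo 0 1 ×ˢ Set.Ioo a b) :=
    (hcont.continuousOn.integrableOn_compact (isCompact_Icc.prod isCompact_Icc)).mono_set
      (Set.prod_mono Set.Ioo_subset_Icc_self Set.Ioo_subset_Icc_self)
  calc ∫⁻ z in Set.Ioo 0 1 ×ˢ Set.Ioo a b, ENNReal.ofReal |(fanDeriv y o z).det|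
      = ∫⁻ z in Set.Ioo 0 1 ×ˢ Set.Ioo a b,
          ENNReal.ofReal (z.1 * om (y z.2 - o) (deriv y z.2)) :=
        setLIntegral_congr_fun hm fun z hz => by
          simp only [det_fanDeriv, abs_of_nonneg (hnn' z hz)]
    _ = ENNReal.ofReal (∫ z in Set.Ioo 0 1 ×ˢ Set.Ioo a b,
          z.1 * om (y z.2 - o) (deriv y z.2)) :=
        (ofReal_integral_eq_lintegral_ofReal hint
          ((ae_restrict_iff' hm).2 (Eventually.of_forall hnn'))).symm
    _ = ENNReal.ofReal (sectorArea y o a b) := by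
        rw [Measure.volume_eq_prod, setIntegral_prod_mul (fun r : ℝ => r)
          (fun t => om (y t - o) (deriv y t)), ← integral_Ioc_eq_integral_Ioo,
          ← integral_Ioc_eq_integral_Ioo, ← intervalIntegral.integral_of_le zero_le_one,
          ← intervalIntegral.integral_of_le hab]
        simp [sectorArea]

lemma volume_image_fan_Ioo (hy : ContDiff ℝ 1 y) (hab : a ≤ b)
    (hpos : ∀ s ∈ Set.Ioo a b, ∀ t ∈ Set.Ioo a b, s < t → 0 < om (y s - o) (y t - o))
    (hnn : ∀ t ∈ Set.Ioo a b, 0 ≤ om (y t - o) (deriv y t)) :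
    volume (fan y o '' (Set.Ioo 0 1 ×ˢ Set.Ioo a b)) = ENNReal.ofReal (sectorArea y o a b) := by
  rw [← lintegral_det_fanDeriv hy hab hnn]
  exact (lintegral_abs_det_fderiv_eq_addHaar_image volume
    (measurableSet_Ioo.prod measurableSet_Ioo)
    (fun z _ => (hasFDerivAt_fan (hy.differentiable one_ne_zero _)).hasFDerivWithinAt)
    (injOn_fan hpos)).symm

lemma volume_image_fan_Icc_le (hy : ContDiff ℝ 1 y) (hab : a ≤ b)
    (hnn : ∀ t ∈ Set.Ioo a b, 0 ≤ om (y t - o) (deriv y t)) :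
    volume (fan y o '' (Set.Icc 0 1 ×ˢ Set.Icc a b)) ≤ ENNReal.ofReal (sectorArea y o a b) := by
  rw [← lintegral_det_fanDeriv hy hab hnn, Measure.volume_eq_prod, setLIntegral_congr
    (Measure.set_prod_ae_eq Ioo_ae_eq_Icc Ioo_ae_eq_Icc), ← Measure.volume_eq_prod]
  exact addHaar_image_le_lintegral_abs_det_fderiv volume
    (measurableSet_Icc.prod measurableSet_Icc)
    (fun z _ => (hasFDerivAt_fan (hy.differentiable one_ne_zero _)).hasFDerivWithinAt)

end Sector

section Caps

/-- The part of `C` strictly to the right of the line directed from `p` to `q`. -/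
def openCap (C : Set (ℝ × ℝ)) (p q : ℝ × ℝ) : Set (ℝ × ℝ) := {z ∈ C | om (q - p) (z - p) < 0}

/-- The part of `C` to the right of, or on, the line directed from `p` to `q`; with the junk value
`C` for `p = q`. -/
def closedCap (C : Set (ℝ × ℝ)) (p q : ℝ × ℝ) : Set (ℝ × ℝ) := {z ∈ C | om (q - p) (z - p) ≤ 0}

variable {C : Set (ℝ × ℝ)}

lemma closedCap_self (C : Set (ℝ × ℝ)) (p : ℝ × ℝ) : closedCap C p p = C := by
  simp [closedCap]

lemma measurableSet_openCap (hC : MeasurableSet C) (p q : ℝ × ℝ) :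
    MeasurableSet (openCap C p q) :=
  hC.inter (isOpen_lt (f := fun z => om (q - p) (z - p)) (by fun_prop)
    continuous_const).measurableSet

lemma convex_om_nonneg (p q : ℝ × ℝ) : Convex ℝ {z | 0 ≤ om (q - p) (z - p)} := by
  simp_rw [om_sub_right _ _ p, sub_nonneg]
  exact convex_halfSpace_ge ⟨om_add_right _, fun r z => om_smul_right r _ z⟩ _

lemma mem_convexHull_triple_of_om {p q r z : ℝ × ℝ} (hpq : 0 < om (q - p) (z - p))
    (hqr : 0 < om (r - q) (z - q)) (hrp : om (r - p) (z - p) ≤ 0) :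
    z ∈ convexHull ℝ {p, q, r} := by
  set s := om (q - p) (z - p) + om (r - q) (z - q) - om (r - p) (z - p) with hs
  have hs0 : 0 < s := by linarith
  refine mem_convexHull_of_exists_fintype (ι := Fin 3)
    ![om (r - q) (z - q) / s, -om (r - p) (z - p) / s, om (q - p) (z - p) / s] ![p, q, r]
    ?_ ?_ ?_ ?_
  · simp only [Fin.forall_fin_succ, Matrix.cons_val]
    exact ⟨div_nonneg hqr.le hs0.le, div_nonneg (neg_nonneg.2 hrp) hs0.le,
      div_nonneg hpq.le hs0.le, by simp⟩
  · simp only [Fin.sum_univ_three, Matrix.cons_val]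
    field_simp
    rw [hs]; ring
  · simp [Fin.forall_fin_succ]
  · simp only [Fin.sum_univ_three, Matrix.cons_val]
    ext <;> simp only [Prod.fst_add, Prod.snd_add, Prod.smul_fst, Prod.smul_snd, smul_eq_mul] <;>
      field_simp <;> simp only [hs, om, Prod.fst_sub, Prod.snd_sub] <;> ring

lemma closedCap_subset_union (C : Set (ℝ × ℝ)) (p q r : ℝ × ℝ) :
    closedCap C p r ⊆ convexHull ℝ {p, q, r} ∪ (closedCap C p q ∪ closedCap C q r) := by
  rintro z ⟨hzC, hz⟩
  by_cases hpq : om (q - p) (z - p) ≤ 0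
  · exact Or.inr (Or.inl ⟨hzC, hpq⟩)
  by_cases hqr : om (r - q) (z - q) ≤ 0
  · exact Or.inr (Or.inr ⟨hzC, hqr⟩)
  exact Or.inl (mem_convexHull_triple_of_om (not_le.1 hpq) (not_le.1 hqr) hz)

lemma closedCap_subset_convexHull_union_iUnion (C : Set (ℝ × ℝ)) (p : ℕ → ℝ × ℝ) (n : ℕ) :
    closedCap C (p 0) (p (n + 1)) ⊆ convexHull ℝ (p '' Set.Iic (n + 1)) ∪
      ⋃ i ∈ Finset.range (n + 1), closedCap C (p i) (p (i + 1)) := by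
  induction n with
  | zero => simp
  | succ n ih =>
    have hmono : convexHull ℝ (p '' Set.Iic (n + 1)) ⊆ convexHull ℝ (p '' Set.Iic (n + 2)) :=
      convexHull_mono (Set.image_mono (Set.Iic_subset_Iic.2 (Nat.le_succ _)))
    have htri : convexHull ℝ {p 0, p (n + 1), p (n + 2)} ⊆ convexHull ℝ (p '' Set.Iic (n + 2)) := by
      refine convexHull_mono ?_
      rintro _ (rfl | rfl | rfl) <;> exact Set.mem_image_of_mem p (by simp)
    rw [Finset.range_add_one, Finset.set_biUnion_insert]
    rintro z hz
    rcases closedCap_subset_union C _ (p (n + 1)) _ hz with hz | hz | hz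
    · exact Or.inl (htri hz)
    · exact (ih hz).imp (@hmono z) Or.inr
    · exact Or.inr (Or.inl hz)

end Caps

lemma exists_mem_frontier_mem_segment {E : Type*} [NormedAddCommGroup E] [NormedSpace ℝ E]
    {C : Set E} (hC : Bornology.IsBounded C) {o p : E} (hp : p ∈ C) (hop : p ≠ o) :
    ∃ q ∈ frontier C, p ∈ segment ℝ o q := by
  have hray : Continuous fun r : ℝ => o + (1 + |r|) • (p - o) := by fun_prop
  have hpos : 0 < ‖p - o‖ := norm_pos_iff.2 (sub_ne_zero.2 hop)
  have hne_univ : (fun r : ℝ => o + (1 + |r|) • (p - o)) ⁻¹' C ≠ Set.univ := by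
    intro huniv
    obtain ⟨R, hR⟩ := hC.exists_norm_le
    set r := (R + ‖o‖) / ‖p - o‖
    have hmem : r ∈ (fun r : ℝ => o + (1 + |r|) • (p - o)) ⁻¹' C := huniv ▸ Set.mem_univ _
    have hle : (1 + |r|) * ‖p - o‖ ≤ R + ‖o‖ := calc
      (1 + |r|) * ‖p - o‖ = ‖o + (1 + |r|) • (p - o) - o‖ := by
        rw [add_sub_cancel_left, norm_smul, Real.norm_of_nonneg (by positivity)]
      _ ≤ R + ‖o‖ := (norm_sub_le _ _).trans (by gcongr; exact hR _ hmem)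
    rw [← le_div_iff₀ hpos] at hle
    linarith [le_abs_self r]
  obtain ⟨r, hr⟩ := nonempty_frontier_iff.2
    ⟨⟨0, by simpa using hp⟩, hne_univ⟩
  refine ⟨_, hray.frontier_preimage_subset C hr, ?_⟩
  rw [segment_eq_image']
  refine ⟨(1 + |r|)⁻¹, ⟨by positivity, inv_le_one_of_one_le₀ (by simp)⟩, ?_⟩
  simp only [add_sub_cancel_left, smul_smul]
  rw [inv_mul_cancel₀ (by positivity), one_smul, add_sub_cancel]

/-- The signed area between the arc of `x` over `[a, b]` and its chord. -/
noncomputable def capArea (x : ℝ → ℝ × ℝ) (a b : ℝ) : ℝ := sectorArea x (x a) a b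

/-- `x` is a `C¹` curve of period `lam` running counterclockwise, once per period, through the
boundary of the compact convex body `C`; every triangle inscribed in order of the parameter is
positively oriented. -/
structure IsConvexContour (x : ℝ → ℝ × ℝ) (lam : ℝ) (C : Set (ℝ × ℝ)) : Prop where
  pos : 0 < lam
  contDiff : ContDiff ℝ 1 x
  periodic : Function.Periodic x lam
  om_pos : ∀ ⦃a b c⦄, a < b → b < c → c < a + lam → 0 < om (x b - x a) (x c - x a)
  isCompact : IsCompact C
  convex : Convex ℝ C
  range_eq : Set.range x = frontier C

/-- The parameters `t 0 < ⋯ < t n` cut a circle of length `lam` into `n` arcs. -/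
structure IsCyclicPartition (t : ℕ → ℝ) (n : ℕ) (lam : ℝ) : Prop where
  strictMonoOn : StrictMonoOn t (Set.Iic n)
  last : t n = t 0 + lam

namespace IsCyclicPartition

variable {t : ℕ → ℝ} {n : ℕ} {lam : ℝ} {i j : ℕ}

lemma lt (ht : IsCyclicPartition t n lam) (hij : i < j) (hj : j ≤ n) : t i < t j :=
  ht.strictMonoOn (hij.le.trans hj) hj hij

lemma le (ht : IsCyclicPartition t n lam) (hij : i ≤ j) (hj : j ≤ n) : t i ≤ t j :=
  ht.strictMonoOn.monotoneOn (hij.trans hj) hj hij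

lemma le_add (ht : IsCyclicPartition t n lam) (hi : i ≤ n) (hj : j ≤ n) : t j ≤ t i + lam := by
  linarith [ht.le hj le_rfl, ht.le (Nat.zero_le i) hi, ht.last]

lemma succ_lt_add (ht : IsCyclicPartition t n lam) (hn : 2 ≤ n) (hi : i < n) :
    t (i + 1) < t i + lam := by
  rcases Nat.eq_zero_or_pos i with rfl | hi0
  · exact ht.last ▸ ht.lt (by omega) le_rfl
  · linarith [ht.le (Nat.succ_le_of_lt hi) le_rfl, ht.lt hi0 hi.le, ht.last]

end IsCyclicPartition

namespace IsConvexContour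

variable {x : ℝ → ℝ × ℝ} {lam : ℝ} {C : Set (ℝ × ℝ)} {a b c d : ℝ}

lemma mem_frontier (hC : IsConvexContour x lam C) (a : ℝ) : x a ∈ frontier C :=
  hC.range_eq ▸ Set.mem_range_self a

lemma mem (hC : IsConvexContour x lam C) (a : ℝ) : x a ∈ C :=
  hC.isCompact.isClosed.frontier_subset (hC.mem_frontier a)

lemma convexHull_subset (hC : IsConvexContour x lam C) {S : Set (ℝ × ℝ)}
    (hS : S ⊆ frontier C) : convexHull ℝ S ⊆ C :=
  convexHull_min (hS.trans hC.isCompact.isClosed.frontier_subset) hC.convex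

lemma image_subset_frontier (hC : IsConvexContour x lam C) (A : Set ℝ) : x '' A ⊆ frontier C :=
  hC.range_eq ▸ Set.image_subset_range x A

lemma measure_ne_top (hC : IsConvexContour x lam C) {S : Set (ℝ × ℝ)} (hS : S ⊆ C) :
    volume S ≠ ⊤ :=
  measure_ne_top_of_subset hS hC.isCompact.measure_ne_top

lemma om_nonneg (hC : IsConvexContour x lam C) (hab : a ≤ b) (hbc : b ≤ c) (hca : c ≤ a + lam) :
    0 ≤ om (x b - x a) (x c - x a) := by
  rcases hab.eq_or_lt with rfl | hab
  · simp
  rcases hbc.eq_or_lt with rfl | hbc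
  · simp
  rcases hca.eq_or_lt with rfl | hca
  · simp [hC.periodic a]
  exact (hC.om_pos hab hbc hca).le

lemma om_deriv_nonneg (hC : IsConvexContour x lam C) (hab : a ≤ b) (hba : b ≤ a + lam) :
    0 ≤ om (x b - x a) (deriv x b) := by
  rcases hba.eq_or_lt with rfl | hba
  · simp [hC.periodic a]
  have hd : HasDerivAt (fun s => om (x b - x a) (x s - x a)) (om (x b - x a) (deriv x b)) b := by
    simpa using hasDerivAt_om (hasDerivAt_const b (x b - x a))
      ((hC.contDiff.differentiable one_ne_zero b).hasDerivAt.sub_const (x a))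
  refine ge_of_tendsto ((hasDerivWithinAt_iff_tendsto_slope' Set.self_notMem_Ioi).1
    hd.hasDerivWithinAt) ?_
  filter_upwards [Ioo_mem_nhdsGT hba] with s hs
  rw [slope_def_field, om_self, sub_zero]
  exact div_nonneg (hC.om_nonneg hab hs.1.le hs.2.le) (sub_nonneg.2 hs.1.le)

lemma capArea_mono (hC : IsConvexContour x lam C) (hab : a ≤ b) (hbc : b ≤ c)
    (hca : c ≤ a + lam) : capArea x a b ≤ capArea x a c := by
  have hcont : Continuous fun t => om (x t - x a) (deriv x t) := by
    have := hC.contDiff.continuous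
    have := hC.contDiff.continuous_deriv le_rfl
    fun_prop
  have hnn : 0 ≤ ∫ t in b..c, om (x t - x a) (deriv x t) :=
    intervalIntegral.integral_nonneg hbc fun t ht =>
      hC.om_deriv_nonneg (hab.trans ht.1) (ht.2.trans hca)
  have hsplit := intervalIntegral.integral_add_adjacent_intervals
    (hcont.intervalIntegrable (μ := volume) a b) (hcont.intervalIntegrable b c)
  unfold capArea sectorArea
  linarith

lemma capArea_nonneg (hC : IsConvexContour x lam C) (hab : a ≤ b) (hba : b ≤ a + lam) :
    0 ≤ capArea x a b := by
  simpa [capArea, sectorArea] using hC.capArea_mono le_rfl hab hba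

lemma subset_image_fan (hC : IsConvexContour x lam C) (a : ℝ) :
    C ⊆ fan x (x a) '' (Set.Icc 0 1 ×ˢ Set.Ico a (a + lam)) := by
  intro p hp
  by_cases hpa : p = x a
  · exact ⟨(0, a), ⟨by simp, by simp [hC.pos]⟩, by simp [fan, hpa]⟩
  obtain ⟨q, hq, hpq⟩ := exists_mem_frontier_mem_segment hC.isCompact.isBounded hp hpa
  obtain ⟨s', rfl⟩ := hC.range_eq.ge hq
  obtain ⟨s, hs, hss'⟩ := hC.periodic.exists_mem_Ico hC.pos s' a
  rw [hss', segment_eq_image'] at hpq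
  obtain ⟨r, hr, rfl⟩ := hpq
  exact ⟨(r, s), ⟨hr, hs⟩, rfl⟩

lemma closedCap_subset_image_fan (hC : IsConvexContour x lam C) (hab : a < b) :
    closedCap C (x a) (x b) ⊆ fan x (x a) '' (Set.Icc 0 1 ×ˢ Set.Icc a b) := by
  rintro p ⟨hpC, hp⟩
  obtain ⟨⟨r, s⟩, ⟨hr, hs⟩, rfl⟩ := hC.subset_image_fan a hpC
  rcases le_or_gt s b with hsb | hbs
  · exact ⟨(r, s), ⟨hr, hs.1, hsb⟩, rfl⟩
  have hr0 : r = 0 := by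
    simp only [fan, add_sub_cancel_left, om_smul_right] at hp
    exact le_antisymm (nonpos_of_mul_nonpos_left hp (hC.om_pos hab hbs hs.2)) hr.1
  exact ⟨(0, a), ⟨by simp, by simp [hab.le]⟩, by simp [fan, hr0]⟩

lemma image_fan_subset_openCap (hC : IsConvexContour x lam C) (hba : b < a + lam) :
    fan x (x a) '' (Set.Ioo 0 1 ×ˢ Set.Ioo a b) ⊆ openCap C (x a) (x b) := by
  rintro _ ⟨⟨r, s⟩, ⟨hr, hs⟩, rfl⟩
  refine ⟨hC.convex.add_smul_sub_mem (hC.mem a) (hC.mem s) ⟨hr.1.le, hr.2.le⟩, ?_⟩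
  simp only [fan, add_sub_cancel_left, om_smul_right]
  rw [om_swap, mul_neg, neg_lt_zero]
  exact mul_pos hr.1 (hC.om_pos hs.1 hs.2 hba)

lemma volume_closedCap_le (hC : IsConvexContour x lam C) (hab : a < b) (hba : b ≤ a + lam) :
    volume.real (closedCap C (x a) (x b)) ≤ capArea x a b := by
  refine ENNReal.toReal_le_of_le_ofReal (hC.capArea_nonneg hab.le hba) ?_
  exact (measure_mono (hC.closedCap_subset_image_fan hab)).trans
    (volume_image_fan_Icc_le hC.contDiff hab.le
      fun t ht => hC.om_deriv_nonneg ht.1.le (ht.2.le.trans hba))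

lemma capArea_le_volume_openCap (hC : IsConvexContour x lam C) (hab : a ≤ b)
    (hba : b < a + lam) : capArea x a b ≤ volume.real (openCap C (x a) (x b)) := by
  rw [measureReal_def, ← ENNReal.ofReal_le_iff_le_toReal (hC.measure_ne_top fun _ h => h.1),
    capArea, ← volume_image_fan_Ioo hC.contDiff hab
      (fun s hs t ht hst => hC.om_pos hs.1 hst (ht.2.trans hba))
      fun t ht => hC.om_deriv_nonneg ht.1.le (ht.2.trans hba).le]
  exact measure_mono (hC.image_fan_subset_openCap hba)

lemma om_nonneg_of_mem_closedCap (hC : IsConvexContour x lam C) (hab : a ≤ b) (hbc : b ≤ c)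
    (hcd : c < d) (hda : d ≤ a + lam) {p : ℝ × ℝ} (hp : p ∈ closedCap C (x c) (x d)) :
    0 ≤ om (x b - x a) (p - x a) := by
  obtain ⟨⟨r, s⟩, ⟨hr, hs⟩, rfl⟩ := hC.closedCap_subset_image_fan hcd hp
  exact (convex_om_nonneg (x a) (x b)).add_smul_sub_mem (hC.om_nonneg hab hbc (hcd.le.trans hda))
    (hC.om_nonneg hab (hbc.trans hs.1) (hs.2.trans hda)) hr

variable {t : ℕ → ℝ} {n : ℕ}

lemma pairwiseDisjoint_openCap (hC : IsConvexContour x lam C) (ht : IsCyclicPartition t n lam) :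
    (Finset.range n : Set ℕ).PairwiseDisjoint fun i => openCap C (x (t i)) (x (t (i + 1))) := by
  have disjoint_of_lt : ∀ i j, i < j → j < n → Disjoint (openCap C (x (t i)) (x (t (i + 1))))
      (openCap C (x (t j)) (x (t (j + 1)))) := by
    intro i j hij hj
    refine Set.disjoint_left.2 fun p hpi hpj => hpi.2.not_ge ?_
    exact hC.om_nonneg_of_mem_closedCap (ht.le i.le_succ (by omega)) (ht.le hij hj.le)
      (ht.lt j.lt_succ_self hj) (ht.le_add (by omega) hj) ⟨hpj.1, hpj.2.le⟩
  intro i hi j hj hij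
  simp only [Finset.coe_range, Set.mem_Iio] at hi hj
  rcases lt_or_gt_of_ne hij with h | h
  · exact disjoint_of_lt i j h hj
  · exact (disjoint_of_lt j i h hi).symm

lemma om_vertex_nonneg (hC : IsConvexContour x lam C) (ht : IsCyclicPartition t n lam) {i j : ℕ}
    (hi : i < n) (hj : j ≤ n) : 0 ≤ om (x (t (i + 1)) - x (t i)) (x (t j) - x (t i)) := by
  rcases lt_or_ge i j with hij | hji
  · exact hC.om_nonneg (ht.le i.le_succ hi) (ht.le hij hj) (ht.le_add hi.le hj)
  · rw [← hC.periodic (t j)]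
    exact hC.om_nonneg (ht.le i.le_succ hi) (ht.le_add hj hi)
      (by linarith [ht.le hji hi.le])

theorem sum_capArea_add_volume_convexHull_le (hC : IsConvexContour x lam C)
    (ht : IsCyclicPartition t n lam) (hn : 2 ≤ n) {S : Set (ℝ × ℝ)}
    (hS : S ⊆ x '' (t '' Set.Iic n)) :
    ∑ i ∈ Finset.range n, capArea x (t i) (t (i + 1)) + volume.real (convexHull ℝ S) ≤
      volume.real C := by
  have hSC : convexHull ℝ S ⊆ C := hC.convexHull_subset (hS.trans (hC.image_subset_frontier _))
  have hcaps : ⋃ i ∈ Finset.range n, openCap C (x (t i)) (x (t (i + 1))) ⊆ C :=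
    Set.iUnion₂_subset fun i _ p hp => hp.1
  have hmeas : ∀ i ∈ Finset.range n, MeasurableSet (openCap C (x (t i)) (x (t (i + 1)))) :=
    fun i _ => measurableSet_openCap hC.isCompact.measurableSet _ _
  have hdisj : Disjoint (⋃ i ∈ Finset.range n, openCap C (x (t i)) (x (t (i + 1))))
      (convexHull ℝ S) := by
    refine Set.disjoint_left.2 fun p hp hpS => ?_
    obtain ⟨i, hi, hpi⟩ := Set.mem_iUnion₂.1 hp
    refine hpi.2.not_ge (convexHull_min ?_ (convex_om_nonneg (x (t i)) (x (t (i + 1)))) hpS)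
    rintro _ hq
    obtain ⟨_, ⟨j, hj, rfl⟩, rfl⟩ := hS hq
    exact hC.om_vertex_nonneg ht (Finset.mem_range.1 hi) hj
  calc ∑ i ∈ Finset.range n, capArea x (t i) (t (i + 1)) + volume.real (convexHull ℝ S)
      ≤ ∑ i ∈ Finset.range n, volume.real (openCap C (x (t i)) (x (t (i + 1)))) +
          volume.real (convexHull ℝ S) := by
        gcongr with i hi
        have hi := Finset.mem_range.1 hi
        exact hC.capArea_le_volume_openCap (ht.le i.le_succ hi) (ht.succ_lt_add hn hi)
    _ = volume.real ((⋃ i ∈ Finset.range n, openCap C (x (t i)) (x (t (i + 1)))) ∪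
          convexHull ℝ S) := by
        rw [measureReal_union' hdisj (Finset.measurableSet_biUnion _ hmeas)
          (hC.measure_ne_top hcaps) (hC.measure_ne_top hSC),
          measureReal_biUnion_finset (hC.pairwiseDisjoint_openCap ht) hmeas
            fun i _ => hC.measure_ne_top fun _ hp => hp.1]
    _ ≤ volume.real C :=
        measureReal_mono (Set.union_subset hcaps hSC) hC.isCompact.measure_ne_top

theorem volume_le_sum_capArea_add_volume_convexHull (hC : IsConvexContour x lam C)
    (ht : IsCyclicPartition t n lam) :
    volume.real C ≤ ∑ i ∈ Finset.range n, capArea x (t i) (t (i + 1)) +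
      volume.real (convexHull ℝ (x '' (t '' Set.Iic n))) := by
  obtain ⟨m, rfl⟩ : ∃ m, n = m + 1 := Nat.exists_eq_succ_of_ne_zero fun h0 => by
    subst h0; linarith [ht.last, hC.pos]
  have hcover : C ⊆ convexHull ℝ (x '' (t '' Set.Iic (m + 1))) ∪
      ⋃ i ∈ Finset.range (m + 1), closedCap C (x (t i)) (x (t (i + 1))) := by
    have h := closedCap_subset_convexHull_union_iUnion C (fun i => x (t i)) m
    rwa [ht.last, hC.periodic, closedCap_self, ← Set.image_image x t] at h
  have hhull : volume (convexHull ℝ (x '' (t '' Set.Iic (m + 1)))) ≠ ⊤ :=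
    hC.measure_ne_top (hC.convexHull_subset (hC.image_subset_frontier _))
  have hcaps : volume (⋃ i ∈ Finset.range (m + 1), closedCap C (x (t i)) (x (t (i + 1)))) ≠ ⊤ :=
    hC.measure_ne_top (Set.iUnion₂_subset fun i _ p hp => hp.1)
  rw [add_comm]
  refine (measureReal_mono hcover (measure_union_ne_top hhull hcaps)).trans
    ((measureReal_union_le _ _).trans ?_)
  gcongr
  refine (measureReal_biUnion_finset_le _ _).trans (Finset.sum_le_sum fun i hi => ?_)
  have hi := Finset.mem_range.1 hi
  exact hC.volume_closedCap_le (ht.lt i.lt_succ_self hi) (ht.le_add hi.le hi)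

end IsConvexContour

section ArcInequalities

/-- The expansion, up to `O(h ^ 8)`, of the area of a cap over an arc of affine length `h`, where
`K = ∫ k` and `L = ∫ (k ^ 2 + k'')` over the arc. -/
noncomputable def capModel (h K L : ℝ) : ℝ := h ^ 3 / 12 - h ^ 4 * K / 240 + h ^ 6 * L / 10080

/-- An affine function of `(h, K, L, W)` touching `capModel` to the order `η ^ 8` at the optimal
arcs, where `η` is the mean length of the arcs, `κ` the mean affine curvature and
`W = ∫ (k - κ) ^ 2` over the arc. -/
noncomputable def capTangent (η κ h K L W : ℝ) : ℝ :=
  η ^ 3 / 12 + η ^ 2 / 4 * (h - η) - κ * (4 * η ^ 4 * h - 4 * η ^ 5) / 240 - η ^ 4 * K / 240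
    - η ^ 6 * W / 3600 + η ^ 6 * L / 10080

/-- The part of `capModel - capTangent` at `h = η + e` that is negligible for `e = O(η ^ 3)`. -/
noncomputable def capRemainder (η κ e q L : ℝ) : ℝ :=
  -(e ^ 2 * (6 * η ^ 2 + 4 * η * e + e ^ 2) * q / 240)
    - κ * (e ^ 2 *
      ((η + e) ^ 3 + 2 * (η + e) ^ 2 * η + 3 * (η + e) * η ^ 2 + 4 * η ^ 3)) / 240
    + ((η + e) ^ 6 - η ^ 6) * L / 10080

/-- The size relations between the length `h` of an arc and its integrals `K = ∫ k`,
`L = ∫ (k ^ 2 + k'')` and `W = ∫ (k - κ) ^ 2`. -/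
structure ArcBounds (M κ h K L W : ℝ) : Prop where
  one_le : 1 ≤ M
  length_nonneg : 0 ≤ h
  abs_mean_le : |κ| ≤ M
  abs_K_le : |K| ≤ M * h
  abs_L_le : |L| ≤ M * h
  W_nonneg : 0 ≤ W
  W_le : W ≤ M * h
  sq_le : (K - κ * h) ^ 2 ≤ h * W

variable {M B κ η h e p q K L W : ℝ}

lemma ArcBounds.mono {M' : ℝ} (hb : ArcBounds M κ h K L W) (hM : M ≤ M') :
    ArcBounds M' κ h K L W := by
  have hMh : M * h ≤ M' * h := mul_le_mul_of_nonneg_right hM hb.length_nonneg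
  exact ⟨hb.one_le.trans hM, hb.length_nonneg, hb.abs_mean_le.trans hM, hb.abs_K_le.trans hMh,
    hb.abs_L_le.trans hMh, hb.W_nonneg, hb.W_le.trans hMh, hb.sq_le⟩

/-- Completing the square in the deviation `e` of the length of the arc from the mean. -/
lemma capModel_sub_capTangent (η κ e K L W : ℝ) :
    capModel (η + e) K L - capTangent η κ (η + e) K L W =
      η / 4 * (e - η ^ 2 * (K - κ * (η + e)) / 30) ^ 2 + e ^ 3 / 12 +
        capRemainder η κ e (K - κ * (η + e)) L +
        (η ^ 6 * W - η ^ 5 * (K - κ * (η + e)) ^ 2) / 3600 := by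
  unfold capModel capTangent capRemainder; ring

lemma two_mul_pow_six_mul_abs_le (hη : 0 ≤ η) (hη1 : η ≤ 1) (e : ℝ) :
    2 * (η ^ 6 * |e|) ≤ η ^ 2 * e ^ 2 + η ^ 8 := by
  have hamgm := two_mul_le_add_sq (η * |e|) (η ^ 5)
  have hpow : η ^ 10 ≤ η ^ 8 := pow_le_pow_of_le_one hη hη1 (by norm_num)
  rw [mul_pow, sq_abs] at hamgm
  linarith

lemma abs_pow_six_sub_pow_six_le (hη : 0 ≤ η) (he : |e| ≤ η) :
    |(η + e) ^ 6 - η ^ 6| ≤ |e| * (63 * η ^ 5) := by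
  have hnn : 0 ≤ η + e := by linarith [neg_abs_le e]
  have hle : η + e ≤ 2 * η := by linarith [le_abs_self e]
  calc |(η + e) ^ 6 - η ^ 6|
      = |e| * ((η + e) ^ 5 + (η + e) ^ 4 * η + (η + e) ^ 3 * η ^ 2 + (η + e) ^ 2 * η ^ 3
          + (η + e) * η ^ 4 + η ^ 5) := by
        rw [← abs_of_nonneg (a := (η + e) ^ 5 + _ + _ + _ + _ + _) (by positivity), ← abs_mul]
        ring_nf
    _ ≤ |e| * ((2 * η) ^ 5 + (2 * η) ^ 4 * η + (2 * η) ^ 3 * η ^ 2 + (2 * η) ^ 2 * η ^ 3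
          + (2 * η) * η ^ 4 + η ^ 5) := by gcongr
    _ = |e| * (63 * η ^ 5) := by ring

lemma abs_capRemainder_K_term_le (hη : 0 ≤ η) (hη1 : η ≤ 1) (hM : 0 ≤ M) (he : |e| ≤ η)
    (hq : |q| ≤ 4 * M * η) :
    |e ^ 2 * (6 * η ^ 2 + 4 * η * e + e ^ 2) * q / 240| ≤ M * (η ^ 2 * e ^ 2) := by
  have hpoly : |6 * η ^ 2 + 4 * η * e + e ^ 2| ≤ 11 * η ^ 2 := by
    rw [abs_le]; constructor <;> nlinarith [abs_le.1 he]
  calc |e ^ 2 * (6 * η ^ 2 + 4 * η * e + e ^ 2) * q / 240|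
      = e ^ 2 * |6 * η ^ 2 + 4 * η * e + e ^ 2| * |q| / 240 := by
        rw [abs_div, abs_mul, abs_mul, abs_sq, abs_of_pos (by norm_num : (0 : ℝ) < 240)]
    _ ≤ e ^ 2 * (11 * η ^ 2) * (4 * M * 1) / 240 := by gcongr; exact hq.trans (by gcongr)
    _ ≤ M * (η ^ 2 * e ^ 2) := by linarith [show 0 ≤ M * (η ^ 2 * e ^ 2) by positivity]

lemma abs_capRemainder_κ_term_le (hη : 0 ≤ η) (hη1 : η ≤ 1) (hκ : |κ| ≤ M) (he : |e| ≤ η) :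
    |κ * (e ^ 2 * ((η + e) ^ 3 + 2 * (η + e) ^ 2 * η + 3 * (η + e) * η ^ 2 + 4 * η ^ 3)) / 240| ≤
      M * (η ^ 2 * e ^ 2) := by
  have hM : 0 ≤ M := (abs_nonneg κ).trans hκ
  have hnn : 0 ≤ η + e := by linarith [neg_abs_le e]
  have hle : η + e ≤ 2 * η := by linarith [le_abs_self e]
  rw [abs_div, abs_mul, abs_of_nonneg (a := e ^ 2 * _) (by positivity),
    abs_of_pos (by norm_num : (0 : ℝ) < 240)]
  calc |κ| * (e ^ 2 * ((η + e) ^ 3 + 2 * (η + e) ^ 2 * η + 3 * (η + e) * η ^ 2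
        + 4 * η ^ 3)) / 240
      ≤ M * (e ^ 2 * ((2 * η) ^ 3 + 2 * (2 * η) ^ 2 * η + 3 * (2 * η) * η ^ 2
        + 4 * η ^ 3)) / 240 := by gcongr
    _ = M * (η ^ 2 * e ^ 2) * (26 / 240 * η) := by ring
    _ ≤ M * (η ^ 2 * e ^ 2) := mul_le_of_le_one_right (by positivity) (by linarith)

lemma abs_capRemainder_le (hη : 0 ≤ η) (hη1 : η ≤ 1) (hκ : |κ| ≤ M) (he : |e| ≤ η)
    (hq : |q| ≤ 4 * M * η) (hL : |L| ≤ 2 * M * η) :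
    |capRemainder η κ e q L| ≤ 3 * M * (η ^ 2 * e ^ 2 + η ^ 8) := by
  have hM : 0 ≤ M := (abs_nonneg κ).trans hκ
  have hL_term : |((η + e) ^ 6 - η ^ 6) * L / 10080| ≤ M * (η ^ 2 * e ^ 2 + η ^ 8) := by
    rw [abs_div, abs_mul, abs_of_pos (by norm_num : (0 : ℝ) < 10080)]
    calc |(η + e) ^ 6 - η ^ 6| * |L| / 10080
        ≤ |e| * (63 * η ^ 5) * (2 * M * η) / 10080 := by
          gcongr; exact abs_pow_six_sub_pow_six_le hη he
      _ ≤ M * (2 * (η ^ 6 * |e|)) := by linarith [show 0 ≤ M * η ^ 6 * |e| by positivity]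
      _ ≤ M * (η ^ 2 * e ^ 2 + η ^ 8) := by gcongr; exact two_mul_pow_six_mul_abs_le hη hη1 e
  refine (abs_add_le _ _).trans ((add_le_add (abs_sub _ _) hL_term).trans ?_)
  rw [abs_neg]
  linarith [abs_capRemainder_K_term_le hη hη1 hM he hq, abs_capRemainder_κ_term_le hη hη1 hκ he,
    show 0 ≤ M * η ^ 8 by positivity]

lemma neg_le_completed_square_of_abs_le (hM : 1 ≤ M) (hη : 0 ≤ η) (hη1 : η ≤ 1)
    (he : |e| ≤ 4 * M * η ^ 3) :
    -(128 * M ^ 3 * η ^ 8) ≤ η / 4 * (e - p) ^ 2 + e ^ 3 / 12 - 4 * M * (η ^ 2 * e ^ 2) := by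
  have hcube : -(64 * M ^ 3 * η ^ 8) ≤ e ^ 3 := by
    have habs : |e| ^ 3 ≤ 64 * M ^ 3 * η ^ 8 := calc
      |e| ^ 3 ≤ (4 * M * η ^ 3) ^ 3 := by gcongr
      _ = 64 * M ^ 3 * η ^ 9 := by ring
      _ ≤ 64 * M ^ 3 * η ^ 8 := by
        gcongr ?_ * ?_; exact pow_le_pow_of_le_one hη hη1 (by norm_num)
    rw [← abs_pow] at habs
    linarith [neg_abs_le (e ^ 3)]
  have hsq : 4 * M * (η ^ 2 * e ^ 2) ≤ 64 * M ^ 3 * η ^ 8 := calc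
    4 * M * (η ^ 2 * e ^ 2) = 4 * M * (η ^ 2 * |e| ^ 2) := by rw [sq_abs]
    _ ≤ 4 * M * (η ^ 2 * (4 * M * η ^ 3) ^ 2) := by gcongr
    _ = 64 * M ^ 3 * η ^ 8 := by ring
  have : 0 ≤ η / 4 * (e - p) ^ 2 := by positivity
  have : 0 ≤ M ^ 3 * η ^ 8 := by positivity
  linarith

lemma completed_square_nonneg (hη : 0 ≤ η) (hMη : 80 * M * η ≤ 1) (he : |e| ≤ η)
    (hpe : 4 * |p| ≤ |e|) :
    0 ≤ η / 4 * (e - p) ^ 2 + e ^ 3 / 12 - 4 * M * (η ^ 2 * e ^ 2) := by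
  have hdist : 9 / 16 * e ^ 2 ≤ (e - p) ^ 2 := by
    rw [← sq_abs e, ← sq_abs (e - p)]
    nlinarith [abs_sub_abs_le_abs_sub e p, abs_nonneg e, abs_nonneg (e - p)]
  have hcube : -(η * e ^ 2) ≤ e ^ 3 := by nlinarith [sq_nonneg e, (abs_le.1 he).1]
  have hM_term : 80 * M * η * (η * e ^ 2) ≤ 1 * (η * e ^ 2) := by gcongr
  have : η * (9 / 16 * e ^ 2) ≤ η * (e - p) ^ 2 := by gcongr
  have : 0 ≤ η * e ^ 2 := by positivity
  linarith

lemma neg_le_completed_square (hM : 1 ≤ M) (hη : 0 ≤ η) (hMη : 80 * M * η ≤ 1)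
    (he : |e| ≤ η) (hp : |p| ≤ M * η ^ 3) :
    -(128 * M ^ 3 * η ^ 8) ≤ η / 4 * (e - p) ^ 2 + e ^ 3 / 12 - 4 * M * (η ^ 2 * e ^ 2) := by
  rcases le_total |e| (4 * M * η ^ 3) with hsmall | hlarge
  · exact neg_le_completed_square_of_abs_le hM hη (by nlinarith) hsmall
  · exact le_trans (neg_nonpos.2 (by positivity))
      (completed_square_nonneg hη hMη he (by linarith))

namespace ArcBounds

lemma abs_sub_le (hb : ArcBounds M κ h K L W) : |K - κ * h| ≤ 2 * M * h := calc
  |K - κ * h| ≤ |K| + |κ| * |h| := (abs_sub _ _).trans_eq (by rw [abs_mul])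
  _ ≤ M * h + M * h := by
    rw [abs_of_nonneg hb.length_nonneg]
    exact add_le_add hb.abs_K_le
      (mul_le_mul_of_nonneg_right hb.abs_mean_le hb.length_nonneg)
  _ = 2 * M * h := by ring

lemma abs_capRemainder_le (hb : ArcBounds M κ (η + e) K L W) (hη : 0 ≤ η) (hη1 : η ≤ 1)
    (he : |e| ≤ η) :
    |capRemainder η κ e (K - κ * (η + e)) L| ≤ 3 * M * (η ^ 2 * e ^ 2 + η ^ 8) := by
  have hM : 0 ≤ M := zero_le_one.trans hb.one_le
  have hMh : M * (η + e) ≤ M * (2 * η) := by gcongr; linarith [le_abs_self e]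
  exact _root_.abs_capRemainder_le hη hη1 hb.abs_mean_le he
    (by linarith [hb.abs_sub_le]) (by linarith [hb.abs_L_le])

lemma neg_le_variance_term (hb : ArcBounds M κ (η + e) K L W) (hη : 0 ≤ η) (hη1 : η ≤ 1)
    (he : |e| ≤ η) :
    -(M * (η ^ 2 * e ^ 2 + η ^ 8)) ≤ (η ^ 6 * W - η ^ 5 * (K - κ * (η + e)) ^ 2) / 3600 := by
  have hM : 0 ≤ M := zero_le_one.trans hb.one_le
  have hW : W ≤ 2 * M * η := by nlinarith [hb.W_le, le_abs_self e]
  have hterm : η ^ 5 * (e * W) ≤ M * (η ^ 2 * e ^ 2 + η ^ 8) := calc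
    η ^ 5 * (e * W) ≤ η ^ 5 * (|e| * (2 * M * η)) := by
      have := hb.W_nonneg
      gcongr; exact le_abs_self e
    _ = M * (2 * (η ^ 6 * |e|)) := by ring
    _ ≤ M * (η ^ 2 * e ^ 2 + η ^ 8) := by gcongr; exact two_mul_pow_six_mul_abs_le hη hη1 e
  have hsq : η ^ 5 * (K - κ * (η + e)) ^ 2 ≤ η ^ 5 * ((η + e) * W) := by
    gcongr; exact hb.sq_le
  have : 0 ≤ M * (η ^ 2 * e ^ 2 + η ^ 8) := by positivity
  linarith

lemma capTangent_le_of_le_two_mul (hb : ArcBounds M κ h K L W) (hη : 0 ≤ η)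
    (hMη : 80 * M * η ≤ 1) (hh : h ≤ 2 * η) :
    capTangent η κ h K L W ≤ capModel h K L + (4 * M + 128 * M ^ 3) * η ^ 8 := by
  obtain ⟨e, rfl⟩ : ∃ e, h = η + e := ⟨h - η, by ring⟩
  have hM := hb.one_le
  have hη1 : η ≤ 1 := by nlinarith
  have he : |e| ≤ η := abs_le.2 ⟨by linarith [hb.length_nonneg], by linarith⟩
  have hshift : |η ^ 2 * (K - κ * (η + e)) / 30| ≤ M * η ^ 3 := by
    rw [abs_div, abs_mul, abs_sq, abs_of_pos (by norm_num : (0 : ℝ) < 30)]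
    have : η ^ 2 * |K - κ * (η + e)| ≤ η ^ 2 * (2 * M * (2 * η)) := by
      gcongr; exact hb.abs_sub_le.trans (by gcongr)
    linarith [show 0 ≤ M * η ^ 3 by positivity]
  linarith [capModel_sub_capTangent η κ e K L W, hb.neg_le_variance_term hη hη1 he,
    neg_le_completed_square hM hη hMη he hshift,
    neg_le_of_abs_le (hb.abs_capRemainder_le hη hη1 he)]

lemma capModel_sub_capTangent_eq_pow_sub_pow (η κ h K L W : ℝ) :
    capModel h K L - capTangent η κ h K L W = (h - η) ^ 2 * (h + 2 * η) / 12
      - (h ^ 4 - η ^ 4) * (K - κ * h) / 240 - κ * (h ^ 5 - 5 * η ^ 4 * h + 4 * η ^ 5) / 240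
      + (h ^ 6 - η ^ 6) * L / 10080 + η ^ 6 * W / 3600 := by
  unfold capModel capTangent; ring

lemma pow_sub_pow_mul_K_le (hb : ArcBounds M κ h K L W) (hη : 0 ≤ η) (hηh : η ≤ h) :
    (h ^ 4 - η ^ 4) * (K - κ * h) ≤ 2 * M * h ^ 5 := by
  have hM := hb.one_le
  have hh := hb.length_nonneg
  calc (h ^ 4 - η ^ 4) * (K - κ * h)
      ≤ (h ^ 4 - η ^ 4) * (2 * M * h) := mul_le_mul_of_nonneg_left (le_of_abs_le hb.abs_sub_le)
        (sub_nonneg.2 (pow_le_pow_left₀ hη hηh 4))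
    _ ≤ h ^ 4 * (2 * M * h) := by gcongr; linarith [show 0 ≤ η ^ 4 by positivity]
    _ = 2 * M * h ^ 5 := by ring

lemma κ_mul_le (hb : ArcBounds M κ h K L W) (hη : 0 ≤ η) (hηh : η ≤ h) :
    κ * (h ^ 5 - 5 * η ^ 4 * h + 4 * η ^ 5) ≤ 10 * M * h ^ 5 := by
  have hM := hb.one_le
  have hh := hb.length_nonneg
  have hpoly : |h ^ 5 - 5 * η ^ 4 * h + 4 * η ^ 5| ≤ 10 * h ^ 5 := by
    have : η ^ 4 * h ≤ h ^ 4 * h := by gcongr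
    have : η ^ 5 ≤ h ^ 5 := by gcongr
    have : 0 ≤ η ^ 4 * h := by positivity
    have : 0 ≤ η ^ 5 := by positivity
    rw [abs_le]; constructor <;> linarith
  calc κ * (h ^ 5 - 5 * η ^ 4 * h + 4 * η ^ 5)
      ≤ |κ| * |h ^ 5 - 5 * η ^ 4 * h + 4 * η ^ 5| := (le_abs_self _).trans_eq (abs_mul _ _)
    _ ≤ M * (10 * h ^ 5) := by gcongr; exact hb.abs_mean_le
    _ = 10 * M * h ^ 5 := by ring

lemma neg_le_pow_sub_pow_mul_L (hb : ArcBounds M κ h K L W) (hη : 0 ≤ η) (hηh : η ≤ h)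
    (hh1 : h ≤ 1) : -(M * h ^ 5) ≤ (h ^ 6 - η ^ 6) * L := by
  have hM := hb.one_le
  have hh := hb.length_nonneg
  calc -(M * h ^ 5) ≤ -(h ^ 6 * (M * h)) := by
        have : h ^ 7 ≤ h ^ 5 := pow_le_pow_of_le_one hh hh1 (by norm_num)
        nlinarith
    _ ≤ -((h ^ 6 - η ^ 6) * (M * h)) := by gcongr; linarith [show 0 ≤ η ^ 6 by positivity]
    _ = (h ^ 6 - η ^ 6) * -(M * h) := (mul_neg _ _).symm
    _ ≤ (h ^ 6 - η ^ 6) * L := mul_le_mul_of_nonneg_left (neg_le_of_abs_le hb.abs_L_le)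
        (sub_nonneg.2 (pow_le_pow_left₀ hη hηh 6))

lemma capTangent_le_of_two_mul_le (hb : ArcBounds M κ h K L W) (hB : 0 ≤ B) (hη : 0 ≤ η)
    (hMh : 100 * (20 * M + B) * h ≤ 1) (hηh : 2 * η ≤ h) :
    capTangent η κ h K L W ≤ capModel h K L - B * h ^ 8 := by
  have hM := hb.one_le
  have hh := hb.length_nonneg
  have hh1 : h ≤ 1 := by nlinarith
  have hle : η ≤ h := by linarith
  have hmain : h ^ 3 / 48 ≤ (h - η) ^ 2 * (h + 2 * η) / 12 := by
    have : (h / 2) ^ 2 * h ≤ (h - η) ^ 2 * (h + 2 * η) := by gcongr <;> linarith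
    linarith
  have hB_term : B * h ^ 8 ≤ B * h ^ 5 := by
    gcongr ?_ * ?_; exact pow_le_pow_of_le_one hh hh1 (by norm_num)
  have habsorb : 100 * (20 * M + B) * h * h ^ 4 ≤ 1 * h ^ 3 :=
    mul_le_mul hMh (pow_le_pow_of_le_one hh hh1 (by norm_num)) (by positivity) zero_le_one
  have hW_term : 0 ≤ η ^ 6 * W := mul_nonneg (by positivity) hb.W_nonneg
  linarith [capModel_sub_capTangent_eq_pow_sub_pow η κ h K L W, hb.pow_sub_pow_mul_K_le hη hle,
    hb.κ_mul_le hη hle, hb.neg_le_pow_sub_pow_mul_L hη hle hh1, show 0 ≤ M * h ^ 5 by positivity,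
    show 0 ≤ h ^ 3 by positivity]

lemma capTangent_le (hb : ArcBounds M κ h K L W) (hB : 0 ≤ B) (hη : 0 ≤ η)
    (hMη : 100 * (20 * M + B) * η ≤ 1) (hMh : 100 * (20 * M + B) * h ≤ 1) :
    capTangent η κ h K L W ≤
      capModel h K L - B * h ^ 8 + (4 * M + 128 * M ^ 3 + 256 * B) * η ^ 8 := by
  have hM := hb.one_le
  rcases le_total h (2 * η) with hh | hh
  · have hpow : B * h ^ 8 ≤ 256 * B * η ^ 8 := calc
      B * h ^ 8 ≤ B * (2 * η) ^ 8 := by have := hb.length_nonneg; gcongr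
      _ = 256 * B * η ^ 8 := by ring
    linarith [hb.capTangent_le_of_le_two_mul hη (by nlinarith [mul_nonneg hB hη]) hh]
  · linarith [hb.capTangent_le_of_two_mul_le hB hη hMh hh,
      show 0 ≤ (4 * M + 128 * M ^ 3 + 256 * B) * η ^ 8 by positivity]

lemma variance_term_le (hb : ArcBounds M κ (η + e) K L W) (hη : 0 ≤ η) (hη1 : η ≤ 1)
    (he : |e| ≤ η) (heM : |e| ≤ M * η ^ 3)
    (hvar : (η + e) * W - (K - κ * (η + e)) ^ 2 ≤ M * (η + e) ^ 4) :
    (η ^ 6 * W - η ^ 5 * (K - κ * (η + e)) ^ 2) / 3600 ≤ (M + M ^ 2) * η ^ 8 := by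
  have hM : 0 ≤ M := zero_le_one.trans hb.one_le
  have hnn := hb.length_nonneg
  have hle : η + e ≤ 2 * η := by linarith [le_abs_self e]
  have hpow : η ^ 9 ≤ η ^ 8 := pow_le_pow_of_le_one hη hη1 (by norm_num)
  have hvar_term : η ^ 5 * ((η + e) * W - (K - κ * (η + e)) ^ 2) ≤ 16 * M * η ^ 9 := calc
    η ^ 5 * ((η + e) * W - (K - κ * (η + e)) ^ 2) ≤ η ^ 5 * (M * (2 * η) ^ 4) := by
      gcongr; exact hvar.trans (by gcongr)
    _ = 16 * M * η ^ 9 := by ring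
  have he_term : η ^ 5 * (-e * W) ≤ 2 * M ^ 2 * η ^ 9 := calc
    η ^ 5 * (-e * W) ≤ η ^ 5 * (M * η ^ 3 * (2 * M * η)) := by
      gcongr
      · exact hb.W_nonneg
      · exact (neg_le_abs e).trans heM
      · nlinarith [hb.W_le]
    _ = 2 * M ^ 2 * η ^ 9 := by ring
  have : M * η ^ 9 ≤ M * η ^ 8 := by gcongr
  have : M ^ 2 * η ^ 9 ≤ M ^ 2 * η ^ 8 := by gcongr
  linarith [show 0 ≤ M * η ^ 8 by positivity, show 0 ≤ M ^ 2 * η ^ 8 by positivity]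

lemma capModel_le (hb : ArcBounds M κ (η + e) K L W) (hη : 0 ≤ η) (hη1 : η ≤ 1)
    (he : |e| ≤ η) (heM : |e| ≤ M * η ^ 3)
    (hshift : |e - η ^ 2 * (K - κ * (η + e)) / 30| ≤ M * η ^ 5)
    (hvar : (η + e) * W - (K - κ * (η + e)) ^ 2 ≤ M * (η + e) ^ 4) :
    capModel (η + e) K L ≤
      capTangent η κ (η + e) K L W + (4 * M + 2 * M ^ 2 + 4 * M ^ 3) * η ^ 8 := by
  have hM : 0 ≤ M := zero_le_one.trans hb.one_le
  have hsquare : η / 4 * (e - η ^ 2 * (K - κ * (η + e)) / 30) ^ 2 ≤ M ^ 2 * η ^ 8 := by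
    have : η * |e - η ^ 2 * (K - κ * (η + e)) / 30| ^ 2 ≤ η * (M * η ^ 5) ^ 2 := by gcongr
    rw [sq_abs] at this
    have : M ^ 2 * η ^ 11 ≤ M ^ 2 * η ^ 8 := by
      gcongr ?_ * ?_; exact pow_le_pow_of_le_one hη hη1 (by norm_num)
    linarith [show 0 ≤ M ^ 2 * η ^ 8 by positivity]
  have hcube : e ^ 3 ≤ M ^ 3 * η ^ 8 := calc
    e ^ 3 ≤ |e| ^ 3 := (le_abs_self _).trans_eq (abs_pow e 3)
    _ ≤ (M * η ^ 3) ^ 3 := by gcongr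
    _ = M ^ 3 * η ^ 9 := by ring
    _ ≤ M ^ 3 * η ^ 8 := by
      gcongr ?_ * ?_; exact pow_le_pow_of_le_one hη hη1 (by norm_num)
  have hsq : 3 * M * (η ^ 2 * e ^ 2) ≤ 3 * M ^ 3 * η ^ 8 := calc
    3 * M * (η ^ 2 * e ^ 2) = 3 * M * (η ^ 2 * |e| ^ 2) := by rw [sq_abs]
    _ ≤ 3 * M * (η ^ 2 * (M * η ^ 3) ^ 2) := by gcongr
    _ = 3 * M ^ 3 * η ^ 8 := by ring
  linarith [capModel_sub_capTangent η κ e K L W, hb.variance_term_le hη hη1 he heM hvar,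
    le_of_abs_le (hb.abs_capRemainder_le hη hη1 he), show 0 ≤ M ^ 3 * η ^ 8 by positivity]

end ArcBounds

end ArcInequalities

section SmoothFunctions

lemma contDiff_iteratedDeriv {E : Type*} [NormedAddCommGroup E] [NormedSpace ℝ E] {f : ℝ → E}
    (hf : ContDiff ℝ (⊤ : ℕ∞) f) (n : ℕ) : ContDiff ℝ (⊤ : ℕ∞) (iteratedDeriv n f) := by
  rw [iteratedDeriv_eq_iterate]
  exact hf.iterate_deriv n

lemma hasDerivAt_iteratedDeriv {E : Type*} [NormedAddCommGroup E] [NormedSpace ℝ E] {f : ℝ → E}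
    (hf : ContDiff ℝ (⊤ : ℕ∞) f) (n : ℕ) (t : ℝ) :
    HasDerivAt (iteratedDeriv n f) (iteratedDeriv (n + 1) f t) t := by
  rw [iteratedDeriv_succ]
  exact ((contDiff_iteratedDeriv hf n).differentiable (by simp) t).hasDerivAt

lemma iteratedDeriv_add_eq {E : Type*} [NormedAddCommGroup E] [NormedSpace ℝ E] (f : ℝ → E)
    (m n : ℕ) : iteratedDeriv (m + n) f = iteratedDeriv m (iteratedDeriv n f) := by
  simp only [iteratedDeriv_eq_iterate, Function.iterate_add_apply]

lemma periodic_iteratedDeriv {E : Type*} [NormedAddCommGroup E] [NormedSpace ℝ E] {f : ℝ → E}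
    {c : ℝ} (hf : Function.Periodic f c) (n : ℕ) : Function.Periodic (iteratedDeriv n f) c := by
  intro t
  rw [← congrFun (iteratedDeriv_comp_add_const n f c) t, funext hf]

lemma exists_norm_iteratedDeriv_le {E : Type*} [NormedAddCommGroup E] [NormedSpace ℝ E]
    {f : ℝ → E} {c : ℝ} (hf : ContDiff ℝ (⊤ : ℕ∞) f) (hper : Function.Periodic f c) (hc : c ≠ 0)
    (n : ℕ) : ∃ B, ∀ t, ‖iteratedDeriv n f t‖ ≤ B := by
  obtain ⟨B, hB⟩ := ((periodic_iteratedDeriv hper n).isBounded_of_continuous hc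
    (contDiff_iteratedDeriv hf n).continuous).exists_norm_le
  exact ⟨B, Set.forall_mem_range.1 hB⟩

lemma abs_sub_sum_taylor_le {f : ℝ → ℝ} {n : ℕ} {B h : ℝ} (hf : ContDiff ℝ (n + 1) f)
    (hB : ∀ t, |iteratedDeriv (n + 1) f t| ≤ B) (a : ℝ) (hh : 0 ≤ h) :
    |f (a + h) - ∑ i ∈ Finset.range (n + 1), iteratedDeriv i f a * h ^ i / i.factorial| ≤
      B * h ^ (n + 1) := by
  rcases hh.eq_or_lt with rfl | hpos
  · simp [Finset.sum_range_succ']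
  have hne : a ≠ a + h := by linarith
  obtain ⟨c, -, hc⟩ := taylor_mean_remainder_lagrange_iteratedDeriv hne hf.contDiffOn
  have hpoly : taylorWithinEval f n (Set.uIcc a (a + h)) a (a + h) =
      ∑ i ∈ Finset.range (n + 1), iteratedDeriv i f a * h ^ i / i.factorial := by
    rw [taylor_within_apply]
    refine Finset.sum_congr rfl fun i hi => ?_
    rw [iteratedDerivWithin_eq_iteratedDeriv (uniqueDiffOn_uIcc hne)
      (hf.of_le (by exact_mod_cast (Finset.mem_range.1 hi).le)).contDiffAt Set.left_mem_uIcc,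
      smul_eq_mul, add_sub_cancel_left]
    ring
  rw [← hpoly, hc, add_sub_cancel_left, abs_div, abs_mul, abs_of_pos (pow_pos hpos _), Nat.abs_cast]
  have : 0 ≤ B := (abs_nonneg _).trans (hB c)
  calc |iteratedDeriv (n + 1) f c| * h ^ (n + 1) / (n + 1).factorial
      ≤ |iteratedDeriv (n + 1) f c| * h ^ (n + 1) :=
        div_le_self (by positivity) (by exact_mod_cast (n + 1).factorial_pos)
    _ ≤ B * h ^ (n + 1) := by gcongr; exact hB c

lemma exists_abs_integral_sub_sum_taylor_le {f : ℝ → ℝ} {c : ℝ} (hf : ContDiff ℝ (⊤ : ℕ∞) f)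
    (hper : Function.Periodic f c) (hc : c ≠ 0) (n : ℕ) :
    ∃ B, ∀ a h, 0 ≤ h → |(∫ t in a..a + h, f t) -
      ∑ i ∈ Finset.range n, iteratedDeriv i f a * h ^ (i + 1) / (i + 1).factorial| ≤
        B * h ^ (n + 1) := by
  obtain ⟨B, hB⟩ := exists_norm_iteratedDeriv_le hf hper hc n
  refine ⟨B, fun a h hh => ?_⟩
  have hderiv (b : ℝ) : HasDerivAt (fun b => ∫ t in a..b, f t) (f b) b :=
    intervalIntegral.integral_hasDerivAt_right (hf.continuous.intervalIntegrable _ _)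
      hf.continuous.aestronglyMeasurable.stronglyMeasurableAtFilter hf.continuous.continuousAt
  have hderiv_eq : deriv (fun b => ∫ t in a..b, f t) = f := funext fun b => (hderiv b).deriv
  have hsmooth : ContDiff ℝ (⊤ : ℕ∞) fun b => ∫ t in a..b, f t :=
    contDiff_infty_iff_deriv.2 ⟨fun b => (hderiv b).differentiableAt, by rwa [hderiv_eq]⟩
  have htaylor := abs_sub_sum_taylor_le (contDiff_infty.1 hsmooth (n + 1))
    (by simpa only [iteratedDeriv_succ', hderiv_eq] using! hB) a hh
  simpa only [Finset.sum_range_succ' _ n, iteratedDeriv_succ', hderiv_eq, iteratedDeriv_zero,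
    intervalIntegral.integral_same, zero_mul, zero_div, add_zero] using htaylor

end SmoothFunctions

/-- The affine curvature of a curve parametrized by affine arc length. -/
noncomputable def affCurv (x : ℝ → ℝ × ℝ) (t : ℝ) : ℝ :=
  om (iteratedDeriv 2 x t) (iteratedDeriv 3 x t)

/-- `x` is a smooth plane curve parametrized by affine arc length. -/
structure IsAffineArcLength (x : ℝ → ℝ × ℝ) : Prop where
  contDiff : ContDiff ℝ (⊤ : ℕ∞) x
  om_deriv : ∀ t, om (deriv x t) (iteratedDeriv 2 x t) = 1

lemma om_smul_eq (u v w : ℝ × ℝ) : om u v • w = om w v • u + om u w • v := by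
  ext <;> simp only [om, Prod.smul_fst, Prod.smul_snd, Prod.fst_add, Prod.snd_add, smul_eq_mul] <;>
    ring

lemma abs_om_le (u v : ℝ × ℝ) : |om u v| ≤ 2 * (‖u‖ * ‖v‖) := calc
  |om u v| ≤ |u.1| * |v.2| + |u.2| * |v.1| := by
    simpa only [om, abs_mul] using abs_sub (u.1 * v.2) (u.2 * v.1)
  _ ≤ ‖u‖ * ‖v‖ + ‖u‖ * ‖v‖ := by
    gcongr
    exacts [norm_fst_le u, norm_snd_le v, norm_snd_le u, norm_fst_le v]
  _ = 2 * (‖u‖ * ‖v‖) := by ring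

namespace IsAffineArcLength

variable {x : ℝ → ℝ × ℝ} {lam : ℝ}

lemma hasDerivAt (hx : IsAffineArcLength x) (t : ℝ) : HasDerivAt x (deriv x t) t :=
  (hx.contDiff.differentiable (by simp) t).hasDerivAt

lemma hasDerivAt_deriv (hx : IsAffineArcLength x) (t : ℝ) :
    HasDerivAt (deriv x) (iteratedDeriv 2 x t) t := by
  simpa only [iteratedDeriv_one] using hasDerivAt_iteratedDeriv hx.contDiff 1 t

lemma iteratedDeriv_three (hx : IsAffineArcLength x) (t : ℝ) :
    iteratedDeriv 3 x t = -affCurv x t • deriv x t := by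
  have hzero : om (deriv x t) (iteratedDeriv 3 x t) = 0 := by
    have hder := hasDerivAt_om (hx.hasDerivAt_deriv t) (hasDerivAt_iteratedDeriv hx.contDiff 2 t)
    simp only [hx.om_deriv, om_self, zero_add] at hder
    exact hder.unique (hasDerivAt_const t 1)
  have hsplit := om_smul_eq (deriv x t) (iteratedDeriv 2 x t) (iteratedDeriv 3 x t)
  rwa [hx.om_deriv, hzero, one_smul, zero_smul, add_zero, om_swap] at hsplit

lemma contDiff_affCurv (hx : IsAffineArcLength x) : ContDiff ℝ (⊤ : ℕ∞) (affCurv x) := by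
  have h2 := contDiff_iteratedDeriv hx.contDiff 2
  have h3 := contDiff_iteratedDeriv hx.contDiff 3
  unfold affCurv om
  fun_prop

end IsAffineArcLength

lemma periodic_affCurv {x : ℝ → ℝ × ℝ} {c : ℝ} (hper : Function.Periodic x c) :
    Function.Periodic (affCurv x) c := fun t => by
  simp only [affCurv, periodic_iteratedDeriv hper _ t]

section CapExpansion

variable {x : ℝ → ℝ × ℝ} {lam : ℝ}

namespace IsAffineArcLength

lemma hasDerivAt_capArea (hx : IsAffineArcLength x) (a b : ℝ) :
    HasDerivAt (capArea x a) (1 / 2 * om (x b - x a) (deriv x b)) b := by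
  have hcont : Continuous fun t => om (x t - x a) (deriv x t) := by
    have := hx.contDiff.continuous
    have := hx.contDiff.continuous_deriv (by simp)
    fun_prop
  exact (intervalIntegral.integral_hasDerivAt_right (hcont.intervalIntegrable _ _)
    hcont.aestronglyMeasurable.stronglyMeasurableAtFilter hcont.continuousAt).const_mul _

lemma deriv_capArea (hx : IsAffineArcLength x) (a : ℝ) :
    deriv (capArea x a) = fun b => 1 / 2 * om (x b - x a) (deriv x b) :=
  funext fun b => (hx.hasDerivAt_capArea a b).deriv

lemma contDiff_capArea (hx : IsAffineArcLength x) (a : ℝ) :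
    ContDiff ℝ (⊤ : ℕ∞) (capArea x a) := by
  rw [contDiff_infty_iff_deriv, hx.deriv_capArea]
  refine ⟨fun b => (hx.hasDerivAt_capArea a b).differentiableAt, ?_⟩
  have := hx.contDiff
  have : ContDiff ℝ (⊤ : ℕ∞) (deriv x) := (contDiff_infty_iff_deriv.1 hx.contDiff).2
  unfold om
  fun_prop

lemma iteratedDeriv_two_capArea (hx : IsAffineArcLength x) (a : ℝ) :
    iteratedDeriv 2 (capArea x a) = fun b => 1 / 2 * om (x b - x a) (iteratedDeriv 2 x b) := by
  funext b
  have hder := (hasDerivAt_om ((hx.hasDerivAt b).sub_const (x a))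
    (hx.hasDerivAt_deriv b)).const_mul (1 / 2)
  rw [om_self, zero_add] at hder
  rw [iteratedDeriv_succ, iteratedDeriv_one, hx.deriv_capArea]
  exact hder.deriv

lemma iteratedDeriv_three_capArea (hx : IsAffineArcLength x) (a : ℝ) :
    iteratedDeriv 3 (capArea x a) = fun b => 1 / 2 - affCurv x b * deriv (capArea x a) b := by
  funext b
  have hder := (hasDerivAt_om ((hx.hasDerivAt b).sub_const (x a))
    (hasDerivAt_iteratedDeriv hx.contDiff 2 b)).const_mul (1 / 2)
  rw [hx.om_deriv, hx.iteratedDeriv_three, om_smul_right] at hder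
  rw [iteratedDeriv_succ, hx.iteratedDeriv_two_capArea, hx.deriv_capArea, hder.deriv]
  ring

lemma iteratedDeriv_capArea_add_three (hx : IsAffineArcLength x) (n : ℕ) (a b : ℝ) :
    iteratedDeriv (n + 3) (capArea x a) b = iteratedDeriv n (fun _ => (1 / 2 : ℝ)) b -
      ∑ i ∈ Finset.range (n + 1), n.choose i * iteratedDeriv i (affCurv x) b *
        iteratedDeriv (n - i + 1) (capArea x a) b := by
  have hk : ContDiffAt ℝ n (affCurv x) b := (contDiff_infty.1 hx.contDiff_affCurv n).contDiffAt
  have hD : ContDiffAt ℝ n (deriv (capArea x a)) b :=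
    (contDiff_infty.1 (contDiff_infty_iff_deriv.1 (hx.contDiff_capArea a)).2 n).contDiffAt
  rw [iteratedDeriv_add_eq, hx.iteratedDeriv_three_capArea,
    iteratedDeriv_fun_sub contDiffAt_const (hk.mul hD), iteratedDeriv_fun_mul hk hD]
  simp only [iteratedDeriv_succ']

lemma exists_abs_iteratedDeriv_capArea_le (hx : IsAffineArcLength x)
    (hper : Function.Periodic x lam) (hlam : lam ≠ 0) (n : ℕ) :
    ∃ B, ∀ a b, |iteratedDeriv (n + 1) (capArea x a) b| ≤ B := by
  choose X hX using exists_norm_iteratedDeriv_le hx.contDiff hper hlam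
  choose Y hY using exists_norm_iteratedDeriv_le hx.contDiff_affCurv (periodic_affCurv hper) hlam
  have hchord (j : ℕ) (a b : ℝ) :
      |1 / 2 * om (x b - x a) (iteratedDeriv j x b)| ≤ 2 * X 0 * X j := by
    have hdiff : ‖x b - x a‖ ≤ X 0 + X 0 := (norm_sub_le _ _).trans
      (add_le_add (by simpa using hX 0 b) (by simpa using hX 0 a))
    have hX0 : 0 ≤ X 0 := (norm_nonneg _).trans (hX 0 a)
    rw [abs_mul, abs_of_pos one_half_pos]
    calc 1 / 2 * |om (x b - x a) (iteratedDeriv j x b)|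
        ≤ 1 / 2 * (2 * (‖x b - x a‖ * ‖iteratedDeriv j x b‖)) := by gcongr; exact abs_om_le _ _
      _ ≤ 1 / 2 * (2 * ((X 0 + X 0) * X j)) := by gcongr; exact hX j b
      _ = 2 * X 0 * X j := by ring
  induction n using Nat.strong_induction_on with
  | _ n ih =>
    match n with
    | 0 => exact ⟨_, fun a b => by simpa [hx.deriv_capArea] using hchord 1 a b⟩
    | 1 => exact ⟨_, fun a b => by simpa [hx.iteratedDeriv_two_capArea] using hchord 2 a b⟩
    | n + 2 =>
      choose! Z hZ using ih
      refine ⟨1 / 2 + ∑ i ∈ Finset.range (n + 1), n.choose i * Y i * Z (n - i), fun a b => ?_⟩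
      rw [hx.iteratedDeriv_capArea_add_three]
      refine (abs_sub _ _).trans (add_le_add ?_ ((Finset.abs_sum_le_sum_abs _ _).trans
        (Finset.sum_le_sum fun i _ => ?_)))
      · rw [iteratedDeriv_const]; split_ifs <;> norm_num
      · rw [abs_mul, abs_mul, Nat.abs_cast]
        have := (norm_nonneg _).trans (hY i b)
        gcongr
        · exact hY i b
        · exact hZ (n - i) (by omega) a b

lemma sum_taylor_capArea (hx : IsAffineArcLength x) (a h : ℝ) :
    ∑ i ∈ Finset.range 8, iteratedDeriv i (capArea x a) a * h ^ i / i.factorial =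
      h ^ 3 / 12 - affCurv x a * h ^ 5 / 240 - deriv (affCurv x) a * h ^ 6 / 480 +
        (affCurv x a ^ 2 - 6 * iteratedDeriv 2 (affCurv x) a) * h ^ 7 / 10080 := by
  have h0 : iteratedDeriv 0 (capArea x a) a = 0 := by simp [capArea, sectorArea]
  have h1 : iteratedDeriv 1 (capArea x a) a = 0 := by simp [hx.deriv_capArea]
  have h2 : iteratedDeriv 2 (capArea x a) a = 0 := by simp [hx.iteratedDeriv_two_capArea]
  have h3 : iteratedDeriv 3 (capArea x a) a = 1 / 2 := by
    simpa [h1] using hx.iteratedDeriv_capArea_add_three 0 a a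
  have h4 : iteratedDeriv 4 (capArea x a) a = 0 := by
    simpa [Finset.sum_range_succ, iteratedDeriv_const, h1, h2]
      using hx.iteratedDeriv_capArea_add_three 1 a a
  have h5 : iteratedDeriv 5 (capArea x a) a = -(affCurv x a / 2) := by
    rw [hx.iteratedDeriv_capArea_add_three 2 a a]
    norm_num [Finset.sum_range_succ, iteratedDeriv_const, h1, h2, h3]
    ring
  have h6 : iteratedDeriv 6 (capArea x a) a = -(3 * deriv (affCurv x) a / 2) := by
    rw [hx.iteratedDeriv_capArea_add_three 3 a a]
    norm_num [Finset.sum_range_succ, iteratedDeriv_const, h1, h2, h3, h4]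
    ring
  have h7 : iteratedDeriv 7 (capArea x a) a =
      affCurv x a ^ 2 / 2 - 3 * iteratedDeriv 2 (affCurv x) a := by
    rw [hx.iteratedDeriv_capArea_add_three 4 a a]
    norm_num [Finset.sum_range_succ, iteratedDeriv_const, Nat.choose, h1, h2, h3, h4, h5]
    ring
  norm_num [Finset.sum_range_succ, Nat.factorial, h0, h1, h2, h3, h4, h5, h6, h7]
  ring

lemma exists_abs_capArea_sub_capModel_le (hx : IsAffineArcLength x)
    (hper : Function.Periodic x lam) (hlam : lam ≠ 0) :
    ∃ B, 0 ≤ B ∧ ∀ a h, 0 ≤ h → |capArea x a (a + h) - capModel h (∫ t in a..a + h, affCurv x t)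
      (∫ t in a..a + h, (affCurv x t ^ 2 + iteratedDeriv 2 (affCurv x) t))| ≤ B * h ^ 8 := by
  obtain ⟨B₁, hB₁⟩ := hx.exists_abs_iteratedDeriv_capArea_le hper hlam 7
  have hk := hx.contDiff_affCurv
  have hkper := periodic_affCurv hper
  obtain ⟨B₂, hB₂⟩ := exists_abs_integral_sub_sum_taylor_le hk hkper hlam 3
  obtain ⟨B₃, hB₃⟩ := exists_abs_integral_sub_sum_taylor_le
    (f := fun t => affCurv x t ^ 2 + iteratedDeriv 2 (affCurv x) t)
    ((hk.pow 2).add (contDiff_iteratedDeriv hk 2))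
    (fun t => by simp only [hkper t, periodic_iteratedDeriv hkper 2 t]) hlam 1
  refine ⟨max 0 (B₁ + B₂ / 240 + B₃ / 10080), le_max_left _ _, fun a h hh => ?_⟩
  have hscale {r R c : ℝ} (hc : 0 ≤ c) (hr : |r| ≤ R) : |c * r| ≤ c * R := by
    rw [abs_mul, abs_of_nonneg hc]; gcongr
  have hD := abs_sub_sum_taylor_le (contDiff_infty.1 (hx.contDiff_capArea a) 8) (hB₁ a) a hh
  have hK := hscale (pow_nonneg hh 4) (hB₂ a h hh)
  have hL := hscale (pow_nonneg hh 6) (hB₃ a h hh)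
  rw [hx.sum_taylor_capArea] at hD
  norm_num [Finset.sum_range_succ, Nat.factorial, -abs_mul] at hK hL
  refine le_trans ?_ (mul_le_mul_of_nonneg_right (le_max_right _ _) (pow_nonneg hh 8))
  unfold capModel
  rw [abs_le] at hD hK hL ⊢
  constructor <;> linarith

lemma exists_le_capArea (hx : IsAffineArcLength x) (hper : Function.Periodic x lam)
    (hlam : lam ≠ 0) :
    ∃ ε > 0, ∀ a h, 0 ≤ h → h ≤ ε → h ^ 3 / 24 ≤ capArea x a (a + h) := by
  obtain ⟨B, hB⟩ := hx.exists_abs_iteratedDeriv_capArea_le hper hlam 3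
  refine ⟨1 / (24 * (|B| + 1)), by positivity, fun a h hh hε => ?_⟩
  have hD := abs_sub_sum_taylor_le (contDiff_infty.1 (hx.contDiff_capArea a) 4) (hB a) a hh
  have hsum : ∑ i ∈ Finset.range 4, iteratedDeriv i (capArea x a) a * h ^ i / i.factorial =
      h ^ 3 / 12 := by
    norm_num [Finset.sum_range_succ, Nat.factorial, hx.deriv_capArea, hx.iteratedDeriv_two_capArea,
      hx.iteratedDeriv_three_capArea, capArea, sectorArea]
    ring
  have hrem : B * h ^ 4 ≤ h ^ 3 / 24 := calc
    B * h ^ 4 ≤ (|B| + 1) * h * h ^ 3 := by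
      rw [mul_assoc, ← pow_succ']; gcongr; linarith [le_abs_self B]
    _ ≤ 1 / 24 * h ^ 3 := by
      gcongr
      calc (|B| + 1) * h ≤ (|B| + 1) * (1 / (24 * (|B| + 1))) := by gcongr
        _ = 1 / 24 := by field_simp
    _ = h ^ 3 / 24 := by ring
  rw [hsum] at hD
  linarith [neg_le_of_abs_le hD]

end IsAffineArcLength
end CapExpansion

section Orientation

lemma collinear_of_om_eq_zero {a b c : ℝ × ℝ} (h : om (b - a) (c - a) = 0) :
    Collinear ℝ {a, b, c} := by
  rcases eq_or_ne b a with rfl | hab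
  · simpa using collinear_pair ℝ b c
  set u := b - a with hu
  have hnorm : om u (-u.2, u.1) ≠ 0 := fun h0 =>
    sub_ne_zero.2 hab (Prod.ext_iff.2 (mul_self_add_mul_self_eq_zero.1
      (by simpa only [om, mul_neg, sub_neg_eq_add] using h0)))
  have hsplit := om_smul_eq u (c - a) (-u.2, u.1)
  rw [h, zero_smul] at hsplit
  refine (collinear_iff_of_mem (p₀ := a) (by simp)).2 ⟨u, ?_⟩
  simp only [Set.mem_insert_iff, Set.mem_singleton_iff, forall_eq_or_imp, forall_eq, vadd_eq_add,
    ← sub_eq_iff_eq_add]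
  refine ⟨⟨0, by simp⟩, ⟨1, by simp [hu]⟩,
    -(om (-u.2, u.1) (c - a) / om u (-u.2, u.1)), ?_⟩
  rw [← smul_right_injective _ hnorm |>.eq_iff]
  simp only [neg_smul, smul_neg, smul_smul, mul_div_cancel₀ _ hnorm]
  exact eq_neg_of_add_eq_zero_right hsplit.symm

lemma om_sub_ne_zero_of_mem_frontier {C : Set (ℝ × ℝ)} {a b c : ℝ × ℝ} (hcl : IsClosed C)
    (hC : StrictConvex ℝ C) (ha : a ∈ frontier C) (hb : b ∈ frontier C) (hc : c ∈ frontier C)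
    (hab : a ≠ b) (hac : a ≠ c) (hbc : b ≠ c) : om (b - a) (c - a) ≠ 0 := by
  have hbetween {p q r : ℝ × ℝ} (hp : p ∈ frontier C) (hq : q ∈ frontier C) (hr : r ∈ frontier C)
      (hpq : p ≠ q) (hqr : q ≠ r) (hpr : p ≠ r) : ¬Wbtw ℝ p q r := fun hw =>
    hq.2 (hC.openSegment_subset (hcl.frontier_subset hp) (hcl.frontier_subset hr) hpr
      (mem_openSegment_of_ne_left_right hpq hqr.symm (affineSegment_eq_segment ℝ p r ▸ hw)))
  intro h
  rcases (collinear_of_om_eq_zero h).wbtw_or_wbtw_or_wbtw with hw | hw | hw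
  · exact hbetween ha hb hc hab hbc hac hw
  · exact hbetween hb hc ha hbc hac.symm hab.symm hw
  · exact hbetween hc ha hb hac.symm hab hbc.symm hw

lemma ne_of_periodic_of_injOn {α : Type*} {f : ℝ → α} {c a b : ℝ}
    (hper : Function.Periodic f c) (hinj : Set.InjOn f (Set.Ico 0 c)) (hab : a < b)
    (hba : b < a + c) : f a ≠ f b := by
  intro heq
  have hc : 0 < c := by linarith
  have hmod (t : ℝ) : f (toIcoMod hc 0 t) = f t := by
    rw [← self_sub_toIcoDiv_zsmul]; exact hper.sub_zsmul_eq _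
  have hmem (t : ℝ) : toIcoMod hc 0 t ∈ Set.Ico 0 c := by
    simpa only [zero_add] using toIcoMod_mem_Ico hc 0 t
  obtain ⟨n, hn⟩ := (toIcoMod_eq_toIcoMod hc).1 (hinj (hmem a) (hmem b) (by rw [hmod, hmod, heq]))
  have hn' : b - a = n * c := by rw [hn, zsmul_eq_mul]
  have hpos : (0 : ℝ) < n := pos_of_mul_pos_left (by linarith : (0 : ℝ) < n * c) hc.le
  have hlt : (n : ℝ) < 1 := lt_of_mul_lt_mul_right (by linarith : (n : ℝ) * c < 1 * c) hc.le
  norm_cast at hpos hlt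
  omega

/-- The parameters `(a, b, c)` of the triangles inscribed in order in a curve of period `lam`. -/
def orderedTriples (lam : ℝ) : Set (ℝ × ℝ × ℝ) :=
  {p | p.1 < p.2.1 ∧ p.2.1 < p.2.2 ∧ p.2.2 < p.1 + lam}

lemma convex_orderedTriples (lam : ℝ) : Convex ℝ (orderedTriples lam) := by
  let a := LinearMap.fst ℝ ℝ (ℝ × ℝ)
  let b := LinearMap.fst ℝ ℝ ℝ ∘ₗ LinearMap.snd ℝ ℝ (ℝ × ℝ)
  let c := LinearMap.snd ℝ ℝ ℝ ∘ₗ LinearMap.snd ℝ ℝ (ℝ × ℝ)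
  have hinter : orderedTriples lam = {p | (a - b) p < 0} ∩ {p | (b - c) p < 0} ∩
      {p | (c - a) p < lam} := by
    ext p
    simp [orderedTriples, a, b, c, and_assoc, sub_lt_iff_lt_add']
  rw [hinter]
  exact ((convex_halfSpace_lt (a - b).isLinear 0).inter
    (convex_halfSpace_lt (b - c).isLinear 0)).inter (convex_halfSpace_lt (c - a).isLinear lam)

variable {x : ℝ → ℝ × ℝ} {lam : ℝ} {C : Set (ℝ × ℝ)}

lemma IsAffineArcLength.exists_om_pos (hx : IsAffineArcLength x) (hper : Function.Periodic x lam)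
    (hlam : 0 < lam) : ∃ b c, 0 < b ∧ b < c ∧ c < lam ∧ 0 < om (x b - x 0) (x c - x 0) := by
  obtain ⟨ε, hε, hcap⟩ := hx.exists_le_capArea hper hlam.ne'
  have hm : 0 < min ε lam := lt_min hε hlam
  set h := min ε lam / 2 with hh_def
  have hh : 0 < h := half_pos hm
  have hhε : h ≤ ε := by linarith [min_le_left ε lam]
  have hhlam : h < lam := by linarith [min_le_right ε lam]
  obtain ⟨b, hb, hpos⟩ : ∃ b ∈ Set.Ioc 0 h, 0 < om (x b - x 0) (deriv x b) := by
    by_contra! hneg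
    have hint : capArea x 0 h ≤ 0 := by
      rw [capArea, sectorArea, intervalIntegral.integral_of_le hh.le]
      linarith [setIntegral_nonpos measurableSet_Ioc hneg (μ := volume)]
    have := hcap 0 h hh.le hhε
    rw [zero_add] at this
    linarith [pow_pos hh 3]
  have hder : HasDerivAt (fun c => om (x b - x 0) (x c - x 0)) (om (x b - x 0) (deriv x b)) b := by
    simpa using hasDerivAt_om (hasDerivAt_const b (x b - x 0)) ((hx.hasDerivAt b).sub_const (x 0))
  have hsign := eventually_nhdsWithin_sign_eq_of_deriv_pos
    (f := fun c => om (x b - x 0) (x c - x 0)) (by rwa [hder.deriv]) (om_self _)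
  obtain ⟨c, hc, hbc, hclam⟩ := ((hsign.filter_mono (nhdsWithin_le_nhds (s := Set.Ioi b))).and
    (Ioo_mem_nhdsGT (hb.2.trans_lt hhlam))).exists
  refine ⟨b, c, hb.1, hbc, hclam, ?_⟩
  rwa [sign_pos (sub_pos.2 hbc), sign_eq_one_iff] at hc

theorem IsAffineArcLength.isConvexContour (hx : IsAffineArcLength x) (hlam : 0 < lam)
    (hper : Function.Periodic x lam) (hinj : Set.InjOn x (Set.Ico 0 lam)) (hcomp : IsCompact C)
    (hconv : StrictConvex ℝ C) (hbd : x '' Set.Icc 0 lam = frontier C) :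
    IsConvexContour x lam C := by
  have hrange : Set.range x = frontier C := by
    rw [← hbd]; simpa only [zero_add] using (hper.image_Icc hlam 0).symm
  refine ⟨hlam, hx.contDiff.of_le (by exact_mod_cast le_top), hper, fun a b c hab hbc hca => ?_,
    hcomp, hconv.convex, hrange⟩
  have hmem (t : ℝ) : x t ∈ frontier C := hrange ▸ Set.mem_range_self t
  have hne : ∀ p ∈ orderedTriples lam, om (x p.2.1 - x p.1) (x p.2.2 - x p.1) ≠ 0 :=
    fun p ⟨hab, hbc, hca⟩ => om_sub_ne_zero_of_mem_frontier hcomp.isClosed hconv (hmem _) (hmem _)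
      (hmem _) (ne_of_periodic_of_injOn hper hinj hab (hbc.trans hca))
      (ne_of_periodic_of_injOn hper hinj (hab.trans hbc) hca)
      (ne_of_periodic_of_injOn hper hinj hbc (hca.trans (add_lt_add_left hab lam)))
  have hcont : Continuous fun p : ℝ × ℝ × ℝ => om (x p.2.1 - x p.1) (x p.2.2 - x p.1) := by
    have := hx.contDiff.continuous
    fun_prop
  obtain ⟨b₀, c₀, hb₀, hbc₀, hc₀, hpos⟩ := hx.exists_om_pos hper hlam
  by_contra! hneg
  obtain ⟨p, hp, hp0⟩ := (convex_orderedTriples lam).isPreconnected.intermediate_value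
    (show (a, b, c) ∈ orderedTriples lam from ⟨hab, hbc, hca⟩)
    (show (0, b₀, c₀) ∈ orderedTriples lam from ⟨hb₀, hbc₀, by simpa using hc₀⟩)
    hcont.continuousOn ⟨hneg, hpos.le⟩
  exact hne p hp hp0

end Orientation

section ArcIntegrals

lemma abs_intervalIntegral_le {f : ℝ → ℝ} {M : ℝ} (hf : ∀ t, |f t| ≤ M) (a b : ℝ) :
    |∫ t in a..b, f t| ≤ M * |b - a| :=
  intervalIntegral.norm_integral_le_of_norm_le_const (f := f) fun t _ => hf t

lemma intervalIntegral_sub_const {u : ℝ → ℝ} (hu : Continuous u) (a b c : ℝ) :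
    ∫ t in a..b, (u t - c) = (∫ t in a..b, u t) - c * (b - a) := by
  rw [intervalIntegral.integral_sub (hu.intervalIntegrable _ _) (by simp),
    intervalIntegral.integral_const, smul_eq_mul, mul_comm]

lemma intervalIntegral_sub_const_sq {u : ℝ → ℝ} (hu : Continuous u) (a b c : ℝ) :
    ∫ t in a..b, (u t - c) ^ 2 =
      (∫ t in a..b, u t ^ 2) - 2 * c * (∫ t in a..b, u t) + c ^ 2 * (b - a) := by
  have hexp (t : ℝ) : (u t - c) ^ 2 = u t ^ 2 - (2 * c * u t - c ^ 2) := by ring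
  simp_rw [hexp]
  rw [intervalIntegral.integral_sub (Continuous.intervalIntegrable (by fun_prop) _ _)
      (Continuous.intervalIntegrable (by fun_prop) _ _),
    intervalIntegral_sub_const (hu.const_mul _), intervalIntegral.integral_const_mul]
  ring

lemma variance_sub_const {u : ℝ → ℝ} (hu : Continuous u) (a b c : ℝ) :
    (b - a) * (∫ t in a..b, (u t - c) ^ 2) - ((∫ t in a..b, u t) - c * (b - a)) ^ 2 =
      (b - a) * (∫ t in a..b, u t ^ 2) - (∫ t in a..b, u t) ^ 2 := by
  rw [intervalIntegral_sub_const_sq hu]; ring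

lemma sq_intervalIntegral_le {u : ℝ → ℝ} (hu : Continuous u) {a b : ℝ} (hab : a ≤ b) :
    (∫ t in a..b, u t) ^ 2 ≤ (b - a) * ∫ t in a..b, u t ^ 2 := by
  rcases hab.eq_or_lt with rfl | hlt
  · simp
  have hvar := variance_sub_const hu a b ((∫ t in a..b, u t) / (b - a))
  rw [div_mul_cancel₀ _ (sub_pos.2 hlt).ne', sub_self] at hvar
  have hnn : 0 ≤ ∫ t in a..b, (u t - (∫ t in a..b, u t) / (b - a)) ^ 2 :=
    intervalIntegral.integral_nonneg hab fun t _ => sq_nonneg _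
  linarith [mul_nonneg (sub_nonneg.2 hab) hnn]

/-- Uniform bounds by `M` on a `C²` affine curvature function `k` and its distance to `κ`. -/
structure CurvatureBounds (k : ℝ → ℝ) (κ M : ℝ) : Prop where
  contDiff : ContDiff ℝ 2 k
  one_le : 1 ≤ M
  abs_mean_le : |κ| ≤ M
  abs_le : ∀ t, |k t| ≤ M
  abs_deriv_le : ∀ t, |deriv k t| ≤ M
  abs_sq_add_le : ∀ t, |k t ^ 2 + iteratedDeriv 2 k t| ≤ M
  sq_sub_le : ∀ t, (k t - κ) ^ 2 ≤ M

/-- `capModel` for the arc from `x a` to `x b` of a curve of affine curvature `k`. -/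
noncomputable def arcModel (k : ℝ → ℝ) (a b : ℝ) : ℝ :=
  capModel (b - a) (∫ t in a..b, k t) (∫ t in a..b, (k t ^ 2 + iteratedDeriv 2 k t))

/-- `capTangent` for the arc from `x a` to `x b` of a curve of affine curvature `k`. -/
noncomputable def arcTangent (k : ℝ → ℝ) (η κ a b : ℝ) : ℝ :=
  capTangent η κ (b - a) (∫ t in a..b, k t) (∫ t in a..b, (k t ^ 2 + iteratedDeriv 2 k t))
    (∫ t in a..b, (k t - κ) ^ 2)

variable {k : ℝ → ℝ} {κ M lam a b : ℝ}

lemma exists_curvatureBounds (hk : ContDiff ℝ (⊤ : ℕ∞) k) (hper : Function.Periodic k lam)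
    (hlam : lam ≠ 0) (κ : ℝ) : ∃ M, CurvatureBounds k κ M := by
  obtain ⟨B₀, hB₀⟩ := exists_norm_iteratedDeriv_le hk hper hlam 0
  obtain ⟨B₁, hB₁⟩ := exists_norm_iteratedDeriv_le hk hper hlam 1
  obtain ⟨B₂, hB₂⟩ := exists_norm_iteratedDeriv_le hk hper hlam 2
  simp only [iteratedDeriv_zero, iteratedDeriv_one, Real.norm_eq_abs] at hB₀ hB₁ hB₂
  have h₀ : 0 ≤ B₀ := (abs_nonneg _).trans (hB₀ 0)
  have h₁ : 0 ≤ B₁ := (abs_nonneg _).trans (hB₁ 0)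
  have h₂ : 0 ≤ B₂ := (abs_nonneg _).trans (hB₂ 0)
  have hκ := abs_nonneg κ
  have hsq := sq_nonneg (B₀ + |κ|)
  have hsq₀ := sq_nonneg B₀
  refine ⟨1 + |κ| + B₀ + B₁ + (B₀ ^ 2 + B₂) + (B₀ + |κ|) ^ 2,
    hk.of_le (WithTop.coe_le_coe.2 le_top),
    by linarith, by linarith, fun t => by linarith [hB₀ t], fun t => by linarith [hB₁ t],
    fun t => ?_, fun t => ?_⟩
  · have hkt : k t ^ 2 ≤ B₀ ^ 2 := sq_le_sq' (abs_le.1 (hB₀ t)).1 (abs_le.1 (hB₀ t)).2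
    linarith [abs_add_le (k t ^ 2) (iteratedDeriv 2 k t), abs_of_nonneg (sq_nonneg (k t)), hB₂ t]
  · have hdist : |k t - κ| ≤ B₀ + |κ| := (abs_sub _ _).trans (by linarith [hB₀ t])
    linarith [sq_le_sq' (abs_le.1 hdist).1 (abs_le.1 hdist).2]

namespace CurvatureBounds

lemma continuous (hk : CurvatureBounds k κ M) : Continuous k := hk.contDiff.continuous

lemma abs_sub_le (hk : CurvatureBounds k κ M) (t : ℝ) : |k t - κ| ≤ M :=
  abs_le_of_sq_le_sq (by nlinarith [hk.sq_sub_le t, hk.one_le]) (by linarith [hk.one_le])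

lemma abs_sub_le_mul (hk : CurvatureBounds k κ M) (s t : ℝ) : |k s - k t| ≤ M * |s - t| :=
  convex_univ.norm_image_sub_le_of_norm_deriv_le
    (fun _ _ => (hk.contDiff.differentiable two_ne_zero).differentiableAt)
    (fun u _ => hk.abs_deriv_le u) (Set.mem_univ t) (Set.mem_univ s)

lemma arcBounds (hk : CurvatureBounds k κ M) (hab : a ≤ b) :
    ArcBounds M κ (b - a) (∫ t in a..b, k t) (∫ t in a..b, (k t ^ 2 + iteratedDeriv 2 k t))
      (∫ t in a..b, (k t - κ) ^ 2) := by
  have hbound {f : ℝ → ℝ} (hf : ∀ t, |f t| ≤ M) : |∫ t in a..b, f t| ≤ M * (b - a) :=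
    (abs_intervalIntegral_le hf a b).trans_eq (by rw [abs_of_nonneg (sub_nonneg.2 hab)])
  refine ⟨hk.one_le, sub_nonneg.2 hab, hk.abs_mean_le, hbound hk.abs_le, hbound hk.abs_sq_add_le,
    intervalIntegral.integral_nonneg hab fun t _ => sq_nonneg _,
    (le_abs_self _).trans (hbound fun t => ?_), ?_⟩
  · exact (abs_of_nonneg (sq_nonneg _)).trans_le (hk.sq_sub_le t)
  · rw [← intervalIntegral_sub_const hk.continuous]
    exact sq_intervalIntegral_le (hk.continuous.sub continuous_const) hab

/-- The left-hand side does not depend on `κ`, which may be replaced by `k a`. -/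
lemma variance_le (hk : CurvatureBounds k κ M) (hab : a ≤ b) :
    (b - a) * (∫ t in a..b, (k t - κ) ^ 2) - ((∫ t in a..b, k t) - κ * (b - a)) ^ 2 ≤
      M ^ 2 * (b - a) ^ 4 := by
  have hlen : 0 ≤ b - a := sub_nonneg.2 hab
  have hosc : ∫ t in a..b, (k t - k a) ^ 2 ≤ (M * (b - a)) ^ 2 * (b - a) := by
    have hle := intervalIntegral.norm_integral_le_of_norm_le_const (a := a) (b := b)
      (f := fun t => (k t - k a) ^ 2) (C := (M * (b - a)) ^ 2) fun t ht => by
        rw [Set.uIoc_of_le hab] at ht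
        rw [norm_pow, Real.norm_eq_abs]
        have hM : 0 ≤ M := by linarith [hk.one_le]
        have hta : |t - a| ≤ b - a := by rw [abs_of_pos (sub_pos.2 ht.1)]; linarith [ht.2]
        gcongr
        exact (hk.abs_sub_le_mul t a).trans (by gcongr)
    exact (le_abs_self _).trans (hle.trans_eq (by rw [abs_of_nonneg hlen]))
  rw [variance_sub_const hk.continuous, ← variance_sub_const hk.continuous a b (k a)]
  nlinarith [mul_le_mul_of_nonneg_left hosc hlen,
    sq_nonneg ((∫ t in a..b, k t) - k a * (b - a))]

lemma abs_integral_sub_integral_shift_le (hk : CurvatureBounds k κ M) {η : ℝ} (hη : 0 ≤ η)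
    (u d h : ℝ) :
    |(∫ t in u..u + η, (k t - κ)) - ∫ t in u + d..u + d + h, (k t - κ)| ≤
      M * |d| * η + M * |h - η| := by
  have hint (a b : ℝ) : IntervalIntegrable (fun t => k t - κ) volume a b :=
    (hk.continuous.sub continuous_const).intervalIntegrable a b
  have hshift : |∫ t in u..u + η, (k t - k (t + d))| ≤ M * |d| * η := by
    have hle := abs_intervalIntegral_le (f := fun t => k t - k (t + d)) (M := M * |d|)
      (fun t => by simpa using hk.abs_sub_le_mul t (t + d)) u (u + η)
    rwa [add_sub_cancel_left, abs_of_nonneg hη] at hle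
  have htail : |∫ t in u + d + η..u + d + h, (k t - κ)| ≤ M * |h - η| := by
    simpa using abs_intervalIntegral_le hk.abs_sub_le (u + d + η) (u + d + h)
  have hsplit : (∫ t in u..u + η, (k t - κ)) - ∫ t in u + d..u + d + h, (k t - κ) =
      (∫ t in u..u + η, (k t - k (t + d))) - ∫ t in u + d + η..u + d + h, (k t - κ) := by
    have htrans : ∫ t in u..u + η, (k (t + d) - κ) = ∫ t in u + d..u + d + η, (k t - κ) := by
      rw [intervalIntegral.integral_comp_add_right (fun t => k t - κ), add_right_comm]
    have hcont := hk.continuous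
    have hdiff : ∫ t in u..u + η, (k t - k (t + d)) =
        (∫ t in u..u + η, (k t - κ)) - ∫ t in u..u + η, (k (t + d) - κ) := by
      rw [← intervalIntegral.integral_sub (hint _ _)
        (Continuous.intervalIntegrable (by fun_prop) _ _)]
      simp only [sub_sub_sub_cancel_right]
    rw [hdiff, htrans, ← intervalIntegral.integral_add_adjacent_intervals (hint _ _)
      (hint (u + d + η) (u + d + h))]
    ring
  rw [hsplit]
  exact (abs_sub _ _).trans (add_le_add hshift htail)

end CurvatureBounds

/-- The sum of the `arcTangent`s over the boundary, where `η` is the mean length of the arcs,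
`I₁ = ∫ k` and `I₂ = ∫ k ^ 2`. -/
noncomputable def deficitExpansion (lam η I₁ I₂ : ℝ) : ℝ :=
  lam * η ^ 2 / 12 - η ^ 4 * I₁ / 240 - η ^ 6 * (I₂ - I₁ ^ 2 / lam) / 3600 + η ^ 6 * I₂ / 10080

lemma IsCyclicPartition.sum_integral {t : ℕ → ℝ} {n : ℕ} (ht : IsCyclicPartition t n lam)
    {f : ℝ → ℝ} (hf : Continuous f) (hper : Function.Periodic f lam) :
    ∑ i ∈ Finset.range n, ∫ s in t i..t (i + 1), f s = ∫ s in 0..lam, f s := by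
  rw [intervalIntegral.sum_integral_adjacent_intervals fun i _ => hf.intervalIntegrable _ _,
    ht.last, hper.intervalIntegral_add_eq (t 0) 0, zero_add]

lemma integral_iteratedDeriv_two_eq_zero (hk : ContDiff ℝ 2 k) (hper : Function.Periodic k lam) :
    ∫ t in 0..lam, iteratedDeriv 2 k t = 0 := by
  have hderiv (t : ℝ) : HasDerivAt (deriv k) (iteratedDeriv 2 k t) t := by
    rw [iteratedDeriv_succ, iteratedDeriv_one]
    exact ((contDiff_succ_iff_deriv (n := 1).1 hk).2.2.differentiable one_ne_zero t).hasDerivAt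
  have hper' := periodic_iteratedDeriv hper 1
  rw [iteratedDeriv_one] at hper'
  rw [intervalIntegral.integral_eq_sub_of_hasDerivAt (fun t _ => hderiv t)
    ((hk.continuous_iteratedDeriv 2 le_rfl).intervalIntegrable _ _), ← hper' 0, zero_add, sub_self]

lemma capTangent_eq (η κ h K L W : ℝ) :
    capTangent η κ h K L W = (η ^ 3 / 12 - η ^ 3 / 4 + κ * η ^ 5 / 60) +
      (η ^ 2 / 4 - κ * η ^ 4 / 60) * h - η ^ 4 / 240 * K - η ^ 6 / 3600 * W +
      η ^ 6 / 10080 * L := by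
  unfold capTangent; ring

lemma IsCyclicPartition.sum_arcTangent {t : ℕ → ℝ} {n : ℕ} (ht : IsCyclicPartition t n lam)
    (hk : ContDiff ℝ 2 k) (hper : Function.Periodic k lam) (hlam : lam ≠ 0) {η : ℝ}
    (hη : n * η = lam) :
    ∑ i ∈ Finset.range n, arcTangent k η ((∫ t in 0..lam, k t) / lam) (t i) (t (i + 1)) =
      deficitExpansion lam η (∫ t in 0..lam, k t) (∫ t in 0..lam, k t ^ 2) := by
  set κ := (∫ t in 0..lam, k t) / lam with hκ
  have hcont := hk.continuous
  have hcont₂ := hk.continuous_iteratedDeriv 2 le_rfl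
  have hper₂ := periodic_iteratedDeriv hper 2
  have hsum_len : ∑ i ∈ Finset.range n, (t (i + 1) - t i) = lam := by
    rw [Finset.sum_range_sub, ht.last]; ring
  have hsum_L : ∑ i ∈ Finset.range n, (∫ s in t i..t (i + 1), (k s ^ 2 + iteratedDeriv 2 k s)) =
      ∫ s in 0..lam, k s ^ 2 := by
    rw [ht.sum_integral (by fun_prop) fun s => by rw [hper s, hper₂ s],
      intervalIntegral.integral_add (Continuous.intervalIntegrable (by fun_prop) _ _)
      (hcont₂.intervalIntegrable _ _), integral_iteratedDeriv_two_eq_zero hk hper, add_zero]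
  have hsum_W : ∑ i ∈ Finset.range n, (∫ s in t i..t (i + 1), (k s - κ) ^ 2) =
      (∫ s in 0..lam, k s ^ 2) - (∫ s in 0..lam, k s) ^ 2 / lam := by
    rw [ht.sum_integral (by fun_prop) fun s => by rw [hper s], intervalIntegral_sub_const_sq hcont,
      hκ]
    field_simp
    ring
  simp_rw [arcTangent, capTangent_eq]
  rw [Finset.sum_add_distrib, Finset.sum_sub_distrib, Finset.sum_sub_distrib,
    Finset.sum_add_distrib, ← Finset.mul_sum, ← Finset.mul_sum, ← Finset.mul_sum,
    ← Finset.mul_sum, hsum_len, ht.sum_integral hcont hper, hsum_L, hsum_W, Finset.sum_const,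
    Finset.card_range, nsmul_eq_mul, deficitExpansion]
  linear_combination (η ^ 2 / 12 - η ^ 2 / 4 + κ * η ^ 4 / 60) * hη

end ArcIntegrals

section Asymptotics

variable {x : ℝ → ℝ × ℝ} {k : ℝ → ℝ} {C : Set (ℝ × ℝ)} {lam : ℝ} {n : ℕ}

namespace IsAffineArcLength

lemma exists_abs_capArea_sub_arcModel_le (hx : IsAffineArcLength x)
    (hper : Function.Periodic x lam) (hlam : lam ≠ 0) :
    ∃ B, 0 ≤ B ∧ ∀ a b, a ≤ b →
      |capArea x a b - arcModel (affCurv x) a b| ≤ B * (b - a) ^ 8 := by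
  obtain ⟨B, hB, hmodel⟩ := hx.exists_abs_capArea_sub_capModel_le hper hlam
  refine ⟨B, hB, fun a b hab => ?_⟩
  simpa only [add_sub_cancel, arcModel] using hmodel a (b - a) (sub_nonneg.2 hab)

lemma exists_curvatureBounds (hx : IsAffineArcLength x) (hper : Function.Periodic x lam)
    (hlam : lam ≠ 0) (κ : ℝ) : ∃ M, CurvatureBounds (affCurv x) κ M :=
  _root_.exists_curvatureBounds hx.contDiff_affCurv (periodic_affCurv hper) hlam κ

lemma exists_arcTangent_sub_le_capArea (hx : IsAffineArcLength x)
    (hper : Function.Periodic x lam) (hlam : lam ≠ 0) (κ : ℝ) :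
    ∃ A ε, 0 ≤ A ∧ 0 < ε ∧ ∀ η a b, 0 ≤ η → η ≤ ε → a ≤ b → b - a ≤ ε →
      arcTangent (affCurv x) η κ a b - A * η ^ 8 ≤ capArea x a b := by
  obtain ⟨M, hk⟩ := hx.exists_curvatureBounds hper hlam κ
  obtain ⟨B, hB, hmodel⟩ := hx.exists_abs_capArea_sub_arcModel_le hper hlam
  have hM : 0 < M := by linarith [hk.one_le]
  have hQ : 0 < 100 * (20 * M + B) := by positivity
  refine ⟨4 * M + 128 * M ^ 3 + 256 * B, 1 / (100 * (20 * M + B)), by positivity, by positivity,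
    fun η a b hη hηε hab habε => ?_⟩
  rw [le_div_iff₀' hQ] at hηε habε
  have htangent := (hk.arcBounds hab).capTangent_le hB hη hηε habε
  rw [← arcTangent, ← arcModel] at htangent
  linarith [neg_le_of_abs_le (hmodel a b hab)]

end IsAffineArcLength

lemma exists_isCyclicPartition_of_subset_Ico {P : Finset ℝ} (hP : (P : Set ℝ) ⊆ Set.Ico 0 lam)
    (hne : P.Nonempty) :
    ∃ t, IsCyclicPartition t P.card lam ∧ (P : Set ℝ) ⊆ t '' Set.Iic P.card := by
  have hn := hne.card_pos
  let e := P.orderEmbOfFin rfl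
  have he (i : Fin P.card) : e i ∈ Set.Ico 0 lam := hP (P.orderEmbOfFin_mem rfl i)
  let t : ℕ → ℝ := fun i => if hi : i < P.card then e ⟨i, hi⟩ else e ⟨0, hn⟩ + lam
  have t_of_lt {i : ℕ} (hi : i < P.card) : t i = e ⟨i, hi⟩ := dif_pos hi
  have t_last : t P.card = e ⟨0, hn⟩ + lam := dif_neg (lt_irrefl _)
  refine ⟨t, ⟨strictMonoOn_Iic_of_lt_succ fun i hi => ?_, by rw [t_last, t_of_lt hn]⟩, ?_⟩
  · rw [Order.succ_eq_add_one, t_of_lt hi]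
    rcases (show i + 1 ≤ P.card from hi).lt_or_eq with hlt | heq
    · rw [t_of_lt hlt]
      exact e.strictMono (by simp)
    · rw [heq, t_last]
      linarith [(he ⟨i, hi⟩).2, (he ⟨0, hn⟩).1]
  · rw [← P.range_orderEmbOfFin rfl]
    rintro _ ⟨i, rfl⟩
    exact ⟨i, i.2.le, t_of_lt i.2⟩

lemma exists_isCyclicPartition_of_card_le {α : Type*} {f : ℝ → α} (hlam : 0 < lam)
    (hper : Function.Periodic f lam) (hn : 0 < n) {S : Finset α} (hS : (S : Set α) ⊆ Set.range f)
    (hcard : S.card ≤ n) :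
    ∃ t, IsCyclicPartition t n lam ∧ (S : Set α) ⊆ f '' (t '' Set.Iic n) := by
  have hsurj : Set.SurjOn f (Set.Ico 0 lam) S := fun p hp => by
    obtain ⟨s, rfl⟩ := hS hp
    obtain ⟨s', hs', heq⟩ := hper.exists_mem_Ico₀ hlam s
    exact ⟨s', hs', heq.symm⟩
  obtain ⟨Q, hQ, hQS⟩ := hsurj.exists_bijOn_subset
  have hQcard : Q.ncard = S.card := hQS.ncard_eq.trans (Set.ncard_coe_finset S)
  obtain ⟨P', hQP, hP, hPcard⟩ := (Set.Ico_infinite hlam).exists_superset_ncard_eq hQ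
    (hQS.finite_iff_finite.2 S.finite_toSet) (hQcard.trans_le hcard)
  obtain ⟨P, rfl⟩ := (Set.finite_of_ncard_pos (hPcard ▸ hn)).exists_finset_coe
  rw [Set.ncard_coe_finset] at hPcard
  subst hPcard
  obtain ⟨t, ht, hPt⟩ := exists_isCyclicPartition_of_subset_Ico hP (Finset.card_pos.1 hn)
  exact ⟨t, ht, hQS.image_eq ▸ Set.image_mono (hQP.trans hPt)⟩

lemma deficitExpansion_add_eq_sum (hk : ContDiff ℝ 2 k) (hper : Function.Periodic k lam)
    (hlam : lam ≠ 0) (hn : n ≠ 0) {t : ℕ → ℝ} (ht : IsCyclicPartition t n lam) (c : ℝ) :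
    deficitExpansion lam (lam / n) (∫ t in 0..lam, k t) (∫ t in 0..lam, k t ^ 2) +
        c * lam * (lam / n) ^ 7 =
      ∑ i ∈ Finset.range n,
        (arcTangent k (lam / n) ((∫ t in 0..lam, k t) / lam) (t i) (t (i + 1)) +
          c * (lam / n) ^ 8) := by
  have hη : n * (lam / n) = lam := mul_div_cancel₀ lam (Nat.cast_ne_zero.2 hn)
  rw [Finset.sum_add_distrib, ht.sum_arcTangent hk hper hlam hη, Finset.sum_const,
    Finset.card_range, nsmul_eq_mul]
  linear_combination -(c * (lam / n) ^ 7) * hη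

lemma tendsto_deficitExpansion_zero (lam I₁ I₂ : ℝ) :
    Tendsto (fun n : ℕ => deficitExpansion lam (lam / n) I₁ I₂) atTop (𝓝 0) := by
  have hcont : Continuous fun η => deficitExpansion lam η I₁ I₂ := by
    unfold deficitExpansion; fun_prop
  have hzero : deficitExpansion lam 0 I₁ I₂ = 0 := by simp [deficitExpansion]
  exact hzero ▸ (hcont.tendsto 0).comp (tendsto_const_div_atTop_nhds_zero_nat lam)

lemma IsConvexContour.capArea_le_sum_capArea (hC : IsConvexContour x lam C) {t : ℕ → ℝ}
    (ht : IsCyclicPartition t n lam) {i : ℕ} (hi : i < n) {e : ℝ} (he : 0 ≤ e)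
    (hei : t i + e ≤ t (i + 1)) :
    capArea x (t i) (t i + e) ≤ ∑ i ∈ Finset.range n, capArea x (t i) (t (i + 1)) := by
  have hnonneg : ∀ j ∈ Finset.range n, 0 ≤ capArea x (t j) (t (j + 1)) := fun j hj =>
    have hj := Finset.mem_range.1 hj
    hC.capArea_nonneg (ht.le j.le_succ hj) (ht.le_add hj.le hj)
  exact (hC.capArea_mono (le_add_of_nonneg_right he) hei (ht.le_add hi.le hi)).trans
    (Finset.single_le_sum hnonneg (Finset.mem_range.2 hi))

theorem IsAffineArcLength.eventually_deficitExpansion_sub_le (hx : IsAffineArcLength x)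
    (hC : IsConvexContour x lam C) :
    ∃ c, ∀ᶠ n : ℕ in atTop, ∀ S : Finset (ℝ × ℝ), (S : Set (ℝ × ℝ)) ⊆ frontier C → S.card ≤ n →
      deficitExpansion lam (lam / n) (∫ t in 0..lam, affCurv x t) (∫ t in 0..lam, affCurv x t ^ 2) +
          c * lam * (lam / n) ^ 7 ≤
        volume.real C - volume.real (convexHull ℝ (S : Set (ℝ × ℝ))) := by
  have hlam := hC.pos
  obtain ⟨M, hk⟩ := hx.exists_curvatureBounds hC.periodic hlam.ne' 0
  obtain ⟨A, ε, hA, hε, hshort⟩ := hx.exists_arcTangent_sub_le_capArea hC.periodic hlam.ne'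
    ((∫ t in 0..lam, affCurv x t) / lam)
  obtain ⟨ε', hε', hlong⟩ := hx.exists_le_capArea hC.periodic hlam.ne'
  set e := min ε ε'
  have he0 : 0 < e := lt_min hε hε'
  refine ⟨-A, ?_⟩
  filter_upwards [(tendsto_deficitExpansion_zero lam (∫ t in 0..lam, affCurv x t)
      (∫ t in 0..lam, affCurv x t ^ 2)).eventually_le_const (by positivity : 0 < e ^ 3 / 24),
    (tendsto_const_div_atTop_nhds_zero_nat lam).eventually_le_const hε,
    eventually_ge_atTop 2] with n hsmall hηε hn S hS hcard
  obtain ⟨t, ht, hSt⟩ := exists_isCyclicPartition_of_card_le hlam hC.periodic (by omega)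
    (hC.range_eq ▸ hS) hcard
  refine le_trans ?_ (le_sub_right_of_add_le (hC.sum_capArea_add_volume_convexHull_le ht hn hSt))
  by_cases hgap : ∀ i < n, t (i + 1) - t i ≤ ε
  · rw [deficitExpansion_add_eq_sum hk.contDiff (periodic_affCurv hC.periodic) hlam.ne' (by omega)
      ht]
    refine Finset.sum_le_sum fun i hi => ?_
    rw [Finset.mem_range] at hi
    rw [neg_mul, ← sub_eq_add_neg]
    exact hshort _ _ _ (by positivity) hηε (ht.le i.le_succ hi) (hgap i hi)
  · push Not at hgap
    obtain ⟨i, hi, hεi⟩ := hgap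
    have hsum := hC.capArea_le_sum_capArea ht hi he0.le (by linarith [min_le_left ε ε'])
    have hlower := hlong (t i) e he0.le (min_le_right _ _)
    have herr : 0 ≤ A * lam * (lam / n) ^ 7 := by positivity
    linarith

end Asymptotics

section UpperBound

/-- The parameter of the `i`-th vertex of the near-optimal polygon: equal spacing `η`, corrected so
that the length of each arc is `η + η ^ 2 * ∫ (k - κ) / 30` up to `O(η ^ 5)`. -/
noncomputable def correctedNode (k : ℝ → ℝ) (κ η : ℝ) (i : ℕ) : ℝ :=
  i * η + η ^ 2 / 30 * ∫ s in 0..i * η, (k s - κ)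

namespace CurvatureBounds

variable {k : ℝ → ℝ} {κ M lam η : ℝ} {n i : ℕ}

lemma arcModel_le (hk : CurvatureBounds k κ M) {M' a b : ℝ} (hM : M ^ 2 ≤ M') (hη : 0 ≤ η)
    (hη1 : η ≤ 1) (hab : a ≤ b) (he : |b - a - η| ≤ η) (heM : |b - a - η| ≤ M' * η ^ 3)
    (hshift : |b - a - η - η ^ 2 * ((∫ t in a..b, k t) - κ * (b - a)) / 30| ≤ M' * η ^ 5) :
    arcModel k a b ≤ arcTangent k η κ a b + (4 * M' + 2 * M' ^ 2 + 4 * M' ^ 3) * η ^ 8 := by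
  have hMM' : M ≤ M' := (le_self_pow₀ hk.one_le two_ne_zero).trans hM
  have hlen : η + (b - a - η) = b - a := add_sub_cancel _ _
  have hvar : (b - a) * (∫ t in a..b, (k t - κ) ^ 2) - ((∫ t in a..b, k t) - κ * (b - a)) ^ 2 ≤
      M' * (b - a) ^ 4 :=
    (hk.variance_le hab).trans (mul_le_mul_of_nonneg_right hM (by positivity))
  have hb := (hk.arcBounds hab).mono hMM'
  rw [← hlen] at hb hvar hshift
  rw [add_sub_cancel_left] at hshift
  simpa only [arcModel, arcTangent, hlen] using hb.capModel_le hη hη1 he heM hshift hvar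

lemma correctedNode_succ_sub (hk : CurvatureBounds k κ M) (η : ℝ) (i : ℕ) :
    correctedNode k κ η (i + 1) - correctedNode k κ η i =
      η + η ^ 2 / 30 * ∫ s in i * η..i * η + η, (k s - κ) := by
  have hint (a b : ℝ) : IntervalIntegrable (fun t => k t - κ) volume a b :=
    (hk.continuous.sub continuous_const).intervalIntegrable a b
  rw [correctedNode, correctedNode, Nat.cast_succ, add_one_mul,
    ← intervalIntegral.integral_add_adjacent_intervals (hint 0 (i * η)) (hint _ (i * η + η))]
  ring

lemma abs_correctedNode_succ_sub_sub_le (hk : CurvatureBounds k κ M) (hη : 0 ≤ η) (i : ℕ) :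
    |correctedNode k κ η (i + 1) - correctedNode k κ η i - η| ≤ M * η ^ 3 := by
  have hint := abs_intervalIntegral_le hk.abs_sub_le (i * η) (i * η + η)
  rw [add_sub_cancel_left, abs_of_nonneg hη] at hint
  have : 0 ≤ M := by linarith [hk.one_le]
  rw [hk.correctedNode_succ_sub, add_sub_cancel_left, abs_mul, abs_of_nonneg (by positivity)]
  calc η ^ 2 / 30 * |∫ s in i * η..i * η + η, (k s - κ)|
      ≤ η ^ 2 / 1 * (M * η) := by gcongr; norm_num
    _ = M * η ^ 3 := by ring

lemma correctedNode_strictMono (hk : CurvatureBounds k κ M) (hη : 0 < η) (hMη : M * η ^ 2 < 1) :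
    StrictMono (correctedNode k κ η) := strictMono_nat_of_lt_succ fun i => by
  have hgap := neg_le_of_abs_le (hk.abs_correctedNode_succ_sub_sub_le hη.le i)
  linarith [mul_lt_of_lt_one_left hη hMη, pow_succ η 2]

lemma isCyclicPartition_correctedNode (hk : CurvatureBounds k κ M) (hη : 0 < η)
    (hMη : M * η ^ 2 < 1) (hn : n * η = lam) (hκ : κ * lam = ∫ t in 0..lam, k t) :
    IsCyclicPartition (correctedNode k κ η) n lam where
  strictMonoOn := (hk.correctedNode_strictMono hη hMη).strictMonoOn _
  last := by simp [correctedNode, hn, intervalIntegral_sub_const hk.continuous, hκ]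

lemma abs_correctedNode_sub_shift_le (hk : CurvatureBounds k κ M) (hη : 0 ≤ η)
    (hi : i * η ≤ lam) :
    |correctedNode k κ η (i + 1) - correctedNode k κ η i - η -
        η ^ 2 * ((∫ t in correctedNode k κ η i..correctedNode k κ η (i + 1), k t) -
          κ * (correctedNode k κ η (i + 1) - correctedNode k κ η i)) / 30| ≤
      M ^ 2 * (1 + lam) * η ^ 5 := by
  have hM : 0 ≤ M := by linarith [hk.one_le]
  set h := correctedNode k κ η (i + 1) - correctedNode k κ η i with hh
  set d := η ^ 2 / 30 * ∫ s in 0..i * η, (k s - κ) with hd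
  have hnode : i * η + d = correctedNode k κ η i := rfl
  have hd_le : |d| ≤ η ^ 2 * (M * lam) := by
    have hint := abs_intervalIntegral_le hk.abs_sub_le 0 (i * η)
    have hiη : 0 ≤ i * η := by positivity
    rw [sub_zero, abs_of_nonneg hiη] at hint
    rw [hd, abs_mul, abs_of_nonneg (by positivity)]
    calc η ^ 2 / 30 * |∫ s in 0..i * η, (k s - κ)|
        ≤ η ^ 2 / 1 * (M * (i * η)) := by gcongr; norm_num
      _ ≤ η ^ 2 * (M * lam) := by rw [div_one]; gcongr
  have hshift := hk.abs_integral_sub_integral_shift_le hη (i * η) d h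
  rw [hnode, hh, add_sub_cancel, intervalIntegral_sub_const hk.continuous
    (correctedNode k κ η i), ← hh] at hshift
  have hgap := hk.abs_correctedNode_succ_sub_sub_le hη i
  rw [← hh] at hgap
  have hdiff : h - η - η ^ 2 * ((∫ t in correctedNode k κ η i..correctedNode k κ η (i + 1), k t) -
        κ * h) / 30 = η ^ 2 / 30 * ((∫ s in i * η..i * η + η, (k s - κ)) -
      ((∫ t in correctedNode k κ η i..correctedNode k κ η (i + 1), k t) - κ * h)) := by
    rw [hh, hk.correctedNode_succ_sub]; ring
  rw [hdiff, abs_mul, abs_of_nonneg (by positivity)]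
  calc _ ≤ η ^ 2 / 1 * (M * (η ^ 2 * (M * lam)) * η + M * (M * η ^ 3)) := by
        gcongr
        · norm_num
        · exact hshift.trans (by gcongr)
    _ = M ^ 2 * (1 + lam) * η ^ 5 := by ring

end CurvatureBounds

variable {x : ℝ → ℝ × ℝ} {C : Set (ℝ × ℝ)} {lam : ℝ} {n : ℕ}

lemma IsAffineArcLength.exists_capArea_correctedNode_le (hx : IsAffineArcLength x) (hlam : 0 < lam)
    (hper : Function.Periodic x lam) {κ M : ℝ} (hk : CurvatureBounds (affCurv x) κ M) :
    ∃ A, ∀ (η : ℝ) (i : ℕ), 0 < η → M * η ^ 2 < 1 → i * η ≤ lam →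
      capArea x (correctedNode (affCurv x) κ η i) (correctedNode (affCurv x) κ η (i + 1)) ≤
        arcTangent (affCurv x) η κ (correctedNode (affCurv x) κ η i)
          (correctedNode (affCurv x) κ η (i + 1)) + A * η ^ 8 := by
  obtain ⟨B, hB, hmodel⟩ := hx.exists_abs_capArea_sub_arcModel_le hper hlam.ne'
  have hM := hk.one_le
  set M' := M ^ 2 * (1 + lam)
  have hMM' : M ^ 2 ≤ M' := le_mul_of_one_le_right (sq_nonneg M) (by linarith)
  refine ⟨4 * M' + 2 * M' ^ 2 + 4 * M' ^ 3 + B * 2 ^ 8, fun η i hη hMη hi => ?_⟩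
  have hη1 : η ≤ 1 := by nlinarith
  have hab := (hk.correctedNode_strictMono hη hMη).monotone i.le_succ
  have hgap := hk.abs_correctedNode_succ_sub_sub_le hη.le i
  have hgap_le : M * η ^ 3 ≤ η := by nlinarith
  have hmain := hk.arcModel_le hMM' hη.le hη1 hab (hgap.trans hgap_le)
    (hgap.trans (by gcongr; nlinarith)) (hk.abs_correctedNode_sub_shift_le hη.le hi)
  have hcap := le_of_abs_le (hmodel _ _ hab)
  have hrem := mul_le_mul_of_nonneg_left (pow_le_pow_left₀ (sub_nonneg.2 hab)
    (by linarith [le_of_abs_le hgap] : _ ≤ 2 * η) 8) hB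
  linarith [mul_pow 2 η 8]

lemma IsCyclicPartition.exists_finset_eq_image {α : Type*} {f : ℝ → α} {t : ℕ → ℝ}
    (ht : IsCyclicPartition t n lam) (hper : Function.Periodic f lam) (hn : 0 < n) :
    ∃ S : Finset α, (S : Set α) = f '' (t '' Set.Iic n) ∧ S.card ≤ n := by
  classical
  refine ⟨(Finset.range n).image (f ∘ t), ?_, Finset.card_image_le.trans_eq (Finset.card_range n)⟩
  rw [Finset.coe_image, Finset.coe_range, Set.image_comp, ← Set.Iio_insert, Set.image_insert_eq,
    Set.image_insert_eq, ht.last, hper, Set.insert_eq_of_mem]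
  exact ⟨t 0, ⟨0, hn, rfl⟩, rfl⟩

theorem IsAffineArcLength.eventually_exists_le_deficitExpansion_add (hx : IsAffineArcLength x)
    (hC : IsConvexContour x lam C) :
    ∃ c, ∀ᶠ n : ℕ in atTop, ∃ S : Finset (ℝ × ℝ), (S : Set (ℝ × ℝ)) ⊆ frontier C ∧ S.card ≤ n ∧
      volume.real C - volume.real (convexHull ℝ (S : Set (ℝ × ℝ))) ≤
        deficitExpansion lam (lam / n) (∫ t in 0..lam, affCurv x t)
          (∫ t in 0..lam, affCurv x t ^ 2) + c * lam * (lam / n) ^ 7 := by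
  have hlam := hC.pos
  set κ := (∫ t in 0..lam, affCurv x t) / lam
  obtain ⟨M, hk⟩ := hx.exists_curvatureBounds hC.periodic hlam.ne' κ
  obtain ⟨A, hA⟩ := hx.exists_capArea_correctedNode_le hlam hC.periodic hk
  have hlim : Tendsto (fun n : ℕ => M * (lam / n) ^ 2) atTop (𝓝 0) := by
    simpa using ((tendsto_const_div_atTop_nhds_zero_nat lam).pow 2).const_mul M
  refine ⟨A, ?_⟩
  filter_upwards [hlim.eventually_lt_const one_pos, eventually_gt_atTop 0] with n hMη hn
  have hη : 0 < lam / n := by positivity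
  have hnη : n * (lam / n) = lam := mul_div_cancel₀ lam (Nat.cast_ne_zero.2 hn.ne')
  have ht := hk.isCyclicPartition_correctedNode hη hMη hnη (div_mul_cancel₀ _ hlam.ne')
  obtain ⟨S, hS, hcard⟩ := ht.exists_finset_eq_image hC.periodic hn
  refine ⟨S, hS ▸ hC.image_subset_frontier _, hcard, ?_⟩
  rw [hS, deficitExpansion_add_eq_sum hk.contDiff (periodic_affCurv hC.periodic) hlam.ne' hn.ne' ht]
  refine (sub_le_iff_le_add.2 (hC.volume_le_sum_capArea_add_volume_convexHull ht)).trans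
    (Finset.sum_le_sum fun i hi => hA _ i hη hMη ?_)
  exact (mul_le_mul_of_nonneg_right (Nat.cast_le.2 (Finset.mem_range.1 hi).le) hη.le).trans_eq hnη

end UpperBound

section InscribedDeficit

/-- `δ_i(n)`: the area between `C` and its best approximating inscribed polygons with at most `n`
vertices. -/
noncomputable def inscribedDeficit (C : Set (ℝ × ℝ)) (n : ℕ) : ℝ :=
  volume.real C - sSup {A : ℝ | ∃ S : Finset (ℝ × ℝ), ↑S ⊆ frontier C ∧ S.card ≤ n ∧
    A = volume.real (convexHull ℝ (S : Set (ℝ × ℝ)))}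

variable {x : ℝ → ℝ × ℝ} {C : Set (ℝ × ℝ)} {lam : ℝ} {n : ℕ}

lemma le_inscribedDeficit {d : ℝ} (h : ∀ S : Finset (ℝ × ℝ), ↑S ⊆ frontier C → S.card ≤ n →
    d ≤ volume.real C - volume.real (convexHull ℝ (S : Set (ℝ × ℝ)))) :
    d ≤ inscribedDeficit C n := by
  rw [inscribedDeficit, le_sub_comm]
  refine csSup_le ⟨_, ∅, by simp, by simp, rfl⟩ ?_
  rintro _ ⟨S, hS, hcard, rfl⟩
  exact le_sub_comm.1 (h S hS hcard)

lemma IsConvexContour.inscribedDeficit_le (hC : IsConvexContour x lam C) {S : Finset (ℝ × ℝ)}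
    (hS : ↑S ⊆ frontier C) (hcard : S.card ≤ n) :
    inscribedDeficit C n ≤ volume.real C - volume.real (convexHull ℝ (S : Set (ℝ × ℝ))) := by
  refine sub_le_sub_left ?_ _
  refine le_csSup ⟨volume.real C, ?_⟩ ⟨S, hS, hcard, rfl⟩
  rintro _ ⟨S', hS', -, rfl⟩
  exact measureReal_mono (hC.convexHull_subset hS') hC.isCompact.measure_ne_top

theorem IsAffineArcLength.exists_abs_inscribedDeficit_sub_le (hx : IsAffineArcLength x)
    (hC : IsConvexContour x lam C) :
    ∃ c, ∀ᶠ n : ℕ in atTop, |inscribedDeficit C n - deficitExpansion lam (lam / n)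
      (∫ t in 0..lam, affCurv x t) (∫ t in 0..lam, affCurv x t ^ 2)| ≤ c * (lam / n) ^ 7 := by
  obtain ⟨c, hlow⟩ := hx.eventually_deficitExpansion_sub_le hC
  obtain ⟨c', hup⟩ := hx.eventually_exists_le_deficitExpansion_add hC
  have hlam := hC.pos
  refine ⟨max (-(c * lam)) (c' * lam), ?_⟩
  filter_upwards [hlow, hup] with n hlow ⟨S, hS, hcard, hle⟩
  have hpow : 0 ≤ (lam / n) ^ 7 := by positivity
  rw [max_mul_of_nonneg _ _ hpow, abs_le']
  constructor
  · refine le_max_of_le_right ?_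
    linarith [hC.inscribedDeficit_le hS hcard]
  · refine le_max_of_le_left ?_
    linarith [le_inscribedDeficit hlow]

lemma tendsto_of_abs_sub_deficitExpansion_le {δ : ℕ → ℝ} {I₁ I₂ c : ℝ} (hlam : lam ≠ 0)
    (h : ∀ᶠ n : ℕ in atTop, |δ n - deficitExpansion lam (lam / n) I₁ I₂| ≤ c * (lam / n) ^ 7) :
    Tendsto (fun n : ℕ => (n : ℝ) ^ 6 *
        (δ n - lam ^ 3 / (12 * (n : ℝ) ^ 2) + lam ^ 4 / (240 * (n : ℝ) ^ 4) * I₁)) atTop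
      (𝓝 (-(9 * lam ^ 6 / 50400) * I₂ + lam ^ 5 / 3600 * I₁ ^ 2)) := by
  rw [tendsto_iff_norm_sub_tendsto_zero]
  refine squeeze_zero' (.of_forall fun n => norm_nonneg _) ?_
    (tendsto_const_div_atTop_nhds_zero_nat (c * lam ^ 7))
  filter_upwards [h, eventually_ne_atTop 0] with n hn hn0
  have hn0' : (n : ℝ) ≠ 0 := Nat.cast_ne_zero.2 hn0
  calc ‖(n : ℝ) ^ 6 * (δ n - lam ^ 3 / (12 * (n : ℝ) ^ 2) + lam ^ 4 / (240 * (n : ℝ) ^ 4) * I₁) -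
          (-(9 * lam ^ 6 / 50400) * I₂ + lam ^ 5 / 3600 * I₁ ^ 2)‖
      = ‖(n : ℝ) ^ 6 * (δ n - deficitExpansion lam (lam / n) I₁ I₂)‖ := by
        rw [deficitExpansion]
        congr 1
        field_simp
        ring
    _ = (n : ℝ) ^ 6 * |δ n - deficitExpansion lam (lam / n) I₁ I₂| := by
        rw [norm_mul, Real.norm_eq_abs, Real.norm_eq_abs, abs_of_nonneg (by positivity)]
    _ ≤ (n : ℝ) ^ 6 * (c * (lam / n) ^ 7) := by gcongr
    _ = c * lam ^ 7 / n := by field_simp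

end InscribedDeficit

theorem stmt_13 (x : ℝ → ℝ × ℝ) (lam : ℝ) (hlam : 0 < lam)
    (hx : ContDiff ℝ (⊤ : ℕ∞) x)
    (haff : ∀ t : ℝ, om (deriv x t) (iteratedDeriv 2 x t) = 1)
    (hper : ∀ t : ℝ, x (t + lam) = x t)
    (hinj : Set.InjOn x (Set.Ico 0 lam))
    (C : Set (ℝ × ℝ)) (hC : C = convexHull ℝ (x '' Set.Icc 0 lam))
    (hcomp : IsCompact C) (hconv : StrictConvex ℝ C)
    (hbd : x '' Set.Icc 0 lam = frontier C)
    (k : ℝ → ℝ) (hk : ∀ t : ℝ, k t = om (iteratedDeriv 2 x t) (iteratedDeriv 3 x t))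
    -- δᵢ(n): area deficit of best approximating inscribed polygons with at most n vertices
    (δi : ℕ → ℝ)
    (hδi : ∀ n : ℕ, 3 ≤ n → δi n = (volume C).toReal -
      sSup { A : ℝ | ∃ S : Finset (ℝ × ℝ), ↑S ⊆ frontier C ∧ S.card ≤ n ∧
        A = (volume (convexHull ℝ (S : Set (ℝ × ℝ)))).toReal }) :
    Tendsto (fun n : ℕ => (n : ℝ) ^ 6 *
        (δi n - lam ^ 3 / (12 * (n : ℝ) ^ 2) +
          lam ^ 4 / (240 * (n : ℝ) ^ 4) * ∫ t in (0:ℝ)..lam, k t))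
      atTop
      (𝓝 (-(9 * lam ^ 6 / 50400) * (∫ t in (0:ℝ)..lam, (k t) ^ 2) +
        lam ^ 5 / 3600 * (∫ t in (0:ℝ)..lam, k t) ^ 2)) := by
  obtain rfl : k = affCurv x := funext hk
  have hcurve : IsAffineArcLength x := ⟨hx, haff⟩
  have hcontour : IsConvexContour x lam C :=
    hcurve.isConvexContour hlam hper hinj hcomp hconv hbd
  obtain ⟨c, hdeficit⟩ := hcurve.exists_abs_inscribedDeficit_sub_le hcontour
  refine tendsto_of_abs_sub_deficitExpansion_le hlam.ne' (c := c) ?_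
  filter_upwards [hdeficit, eventually_ge_atTop 3] with n hn hn3
  exact (hδi n hn3) ▸ hn
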